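/- Let c be a rational number with c ∉ {−5, −5/2, −155/72, −2, −5/4, 0, 19/16}. If c ∉ Im λ and c ∉ Im η, then the fourth dynatomic polynomial Φ_{4,c} is irreducible over ℚ, and its Galois group G_c is isomorphic to the group 𝒲. -/

import Mathlib

open Polynomial

/-- The fourth dynatomic polynomial of `x^2 + c`. -/
noncomputable def Phi4 {K : Type*} [Field K] (c : K) : K[X] :=
  X ^ 12 + C (6 * c) * X ^ 10 + X ^ 9 + C (15 * c ^ 2 + 3 * c) * X ^ 8 +
    C (4 * c) * X ^ 7 + C (20 * c ^ 3 + 12 * c ^ 2 + 1) * X ^ 6 +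
    C (6 * c ^ 2 + 2 * c) * X ^ 5 +
    C (15 * c ^ 4 + 18 * c ^ 3 + 3 * c ^ 2 + 4 * c) * X ^ 4 +
    C (4 * c ^ 3 + 4 * c ^ 2 + 1) * X ^ 3 +
    C (6 * c ^ 5 + 12 * c ^ 4 + 6 * c ^ 3 + 5 * c ^ 2 + c) * X ^ 2 +
    C (c ^ 4 + 2 * c ^ 3 + c ^ 2 + 2 * c) * X +
    C (c ^ 6 + 3 * c ^ 5 + 3 * c ^ 4 + 3 * c ^ 3 + 2 * c ^ 2 + 1)

/-- The group 𝒲: the centralizer in S₁₂ of (1,2,3,4)(5,6,7,8)(9,10,11,12)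
(here written on {0,…,11}). -/
def Wgroup : Subgroup (Equiv.Perm (Fin 12)) :=
  Subgroup.centralizer
    {([0, 1, 2, 3] : List (Fin 12)).formPerm *
      ([4, 5, 6, 7] : List (Fin 12)).formPerm *
      ([8, 9, 10, 11] : List (Fin 12)).formPerm}

/-!
The roots of `Phi4 c` form three `4`-cycles of `x ↦ x² + c`, so the Galois group acts on them
through the wreath product `ℤ/4 ≀ S₃`, which is the centralizer of the permutation induced by
`x ↦ x² + c`. The sums `T` of the three cycles are the roots of `t³ + (4c + 3)t + 4`, their
alternating sums `D` satisfy `D² = T² + 4`, and Galois acts on the three `D`'s by signed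
permutations. A subgroup of `ℤ/4 ≀ S₃` whose image in `ℤ/2 ≀ S₃` contains `(ℤ/2)³` contains
`(ℤ/4)³`, so it is enough that all signed permutations occur.

If they do not, then either the cubic has a root, or a square root of its discriminant, the product
of the `D`'s or the product of these two is rational, or some `(±D₁ ± D₂ ± D₃)²` is rational; the
last happens when, up to `-1`, Galois acts through a complement of `(ℤ/2)³`. Each of these puts a
rational point on a curve: `c ∈ Im η`; the elliptic curve `y² = x³ - 108`, isomorphic to
`u³ + w³ = 4`, which has no affine rational points by descent in `ℤ[ω]`; `c ∈ Im λ`; the genus `2`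
curve `y² = ((x + 4)² + 4)(x³ - 108)`, without affine rational points by a `2`-covering argument
with quadratic reciprocity; and the elliptic curve `y² = x(x² - 2x + 5)`, whose affine points have
`x = 0, 1, 5` and give `c = 0`, which lies in `Im η`, or `c = -5/2`.
-/

/-! ### The elliptic curve `y² = x³ - 108` -/

/-- The ring `ℤ[ω]` of Eisenstein integers, in which `x² + 3y² = (x + y√-3)(x - y√-3)` factors;
here `ω² = -1 - ω` and `⟨a, b⟩` stands for `a + bω`. -/
abbrev EisensteinInt : Type := QuadraticAlgebra ℤ (-1) (-1)

namespace EisensteinInt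

open scoped QuadraticAlgebra

lemma norm_eq (z : EisensteinInt) : z.norm = z.re ^ 2 - z.re * z.im + z.im ^ 2 := by
  rw [QuadraticAlgebra.norm_def]; ring

lemma four_mul_norm (z : EisensteinInt) :
    4 * z.norm = (2 * z.re - z.im) ^ 2 + 3 * z.im ^ 2 := by
  rw [norm_eq]; ring

lemma norm_nonneg (z : EisensteinInt) : 0 ≤ z.norm := by
  have := four_mul_norm z
  nlinarith [sq_nonneg (2 * z.re - z.im), sq_nonneg z.im]

lemma norm_pos {z : EisensteinInt} (hz : z ≠ 0) : 0 < z.norm := by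
  refine (norm_nonneg z).lt_of_ne' fun h ↦ hz ?_
  have h4 := four_mul_norm z
  have him : z.im = 0 := by nlinarith [sq_nonneg (2 * z.re - z.im), sq_nonneg z.im]
  have hre : z.re = 0 := by simpa [h, him] using h4.symm
  ext <;> simp [him, hre]

lemma norm_unit (u : EisensteinIntˣ) : (u : EisensteinInt).norm = 1 :=
  (Int.isUnit_iff.1 (QuadraticAlgebra.isUnit_iff_norm_isUnit.1 u.isUnit)).resolve_right
    (by linarith [norm_nonneg (u : EisensteinInt)])

lemma mul_star_eq_norm (z : EisensteinInt) : z * star z = (z.norm : EisensteinInt) :=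
  (QuadraticAlgebra.algebraMap_norm_eq_mul_star z).symm

/-- Division in `ℤ[ω]`: the coordinates of `x / y = x ȳ / N(y)`, rounded to the nearest integers. -/
def quo (x y : EisensteinInt) : EisensteinInt :=
  ⟨round ((x * star y).re / y.norm : ℚ), round ((x * star y).im / y.norm : ℚ)⟩

lemma sq_two_mul_sub_mul_round_le {n : ℤ} (hn : 0 < n) (v : ℤ) :
    (2 * (v - n * round (v / n : ℚ))) ^ 2 ≤ n ^ 2 := by
  have hnq : (0 : ℚ) < n := mod_cast hn
  have hround := abs_sub_round (v / n : ℚ)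
  have h : |2 * ((v : ℚ) - n * round (v / n : ℚ))| ≤ n := by
    have h2 : 2 * ((v : ℚ) - n * round (v / n : ℚ)) = 2 * n * (v / n - round (v / n : ℚ)) := by
      field_simp
    rw [h2, abs_mul, abs_of_pos (by positivity)]
    nlinarith
  have habs : |2 * (v - n * round (v / n : ℚ))| ≤ n := mod_cast h
  exact sq_le_sq' (neg_le_of_abs_le habs) (le_of_abs_le habs)

lemma norm_sub_mul_quo_lt (x : EisensteinInt) {y : EisensteinInt} (hy : y ≠ 0) :
    (x - y * quo x y).norm < y.norm := by
  have hpos := norm_pos hy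
  set w := x * star y with hw
  have hmul : (x - y * quo x y) * star y = w - (y.norm : EisensteinInt) * quo x y := by
    rw [← mul_star_eq_norm, hw]; ring
  have hnorm := congrArg QuadraticAlgebra.norm hmul
  have hre : (w - (y.norm : EisensteinInt) * quo x y).re
      = w.re - y.norm * round (w.re / y.norm : ℚ) := by simp [quo, hw]
  have him : (w - (y.norm : EisensteinInt) * quo x y).im
      = w.im - y.norm * round (w.im / y.norm : ℚ) := by simp [quo, hw]
  rw [map_mul, QuadraticAlgebra.norm_star, norm_eq (w - _), hre, him] at hnorm
  have hre_le := sq_two_mul_sub_mul_round_le hpos w.re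
  have him_le := sq_two_mul_sub_mul_round_le hpos w.im
  set a := w.re - y.norm * round (w.re / y.norm : ℚ)
  set b := w.im - y.norm * round (w.im / y.norm : ℚ)
  have hab : 4 * (a ^ 2 - a * b + b ^ 2) ≤ 3 * y.norm ^ 2 := by nlinarith [sq_nonneg (a + b)]
  refine lt_of_mul_lt_mul_right (a := y.norm) ?_ hpos.le
  rw [hnorm]
  nlinarith

noncomputable instance : EuclideanDomain EisensteinInt where
  exists_pair_ne := ⟨0, 1, fun h ↦ by simpa using congrArg QuadraticAlgebra.re h⟩
  quotient := quo
  quotient_zero x := by ext <;> simp [quo]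
  remainder x y := x - y * quo x y
  quotient_mul_add_remainder_eq a b := by ring
  r x y := x.norm.natAbs < y.norm.natAbs
  r_wellFounded := (measure fun x : EisensteinInt ↦ x.norm.natAbs).wf
  remainder_lt x y hy := by
    have hlt := norm_sub_mul_quo_lt x hy
    have hnonneg := norm_nonneg (x - y * quo x y)
    lia
  mul_left_not_lt x y hy := by
    have hpos := norm_pos hy
    rw [not_lt, map_mul, Int.natAbs_mul]
    exact Nat.le_mul_of_pos_right _ (by lia)

lemma exists_cube_eq_one_even_im_mul (d : EisensteinInt) :
    ∃ w : EisensteinInt, w ^ 3 = 1 ∧ Even (w * d).im := by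
  rcases Int.even_or_odd d.im with him | him
  · exact ⟨1, one_pow 3, by simpa using him⟩
  rcases Int.even_or_odd d.re with hre | hre
  · exact ⟨⟨-1, -1⟩, by ext <;> simp [pow_succ], by simpa using hre⟩
  · refine ⟨⟨0, 1⟩, by ext <;> simp [pow_succ], ?_⟩
    simpa [← sub_eq_add_neg] using hre.sub_odd him

lemma odd_re_of_even_im {x : EisensteinInt} (hnorm : Odd x.norm) (him : Even x.im) :
    Odd x.re := by
  rw [norm_eq] at hnorm
  simpa [him, parity_simps] using hnorm

lemma unit_eq_one_or_neg_one {u : EisensteinIntˣ} {x : EisensteinInt} (hx : Odd x.norm)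
    (him : Even x.im) (hmul : Even (x * u).im) :
    (u : EisensteinInt) = 1 ∨ (u : EisensteinInt) = -1 := by
  have hre := odd_re_of_even_im hx him
  obtain ⟨v, hv⟩ : ∃ v : EisensteinInt, v = u := ⟨u, rfl⟩
  have hvim : Even v.im := by
    rw [← hv, QuadraticAlgebra.im_mul] at hmul
    simpa [him, Int.not_even_iff_odd.2 hre, parity_simps] using hmul
  have h4 := four_mul_norm v
  rw [hv, norm_unit, ← hv] at h4
  obtain ⟨k, hk⟩ := hvim
  have hk0 : k = 0 := by nlinarith [sq_nonneg (2 * v.re - v.im), sq_nonneg k]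
  have hv0 : v.im = 0 := by simp [hk, hk0]
  have hsq : v.re ^ 2 = 1 := by rw [hv0] at h4; linarith
  rcases sq_eq_one_iff.1 hsq with h | h
  · exact Or.inl (by ext <;> simp [← hv, h, hv0])
  · exact Or.inr (by ext <;> simp [← hv, h, hv0])

lemma isCoprime_star {z : EisensteinInt} (h : IsCoprime z.norm z.trace) : IsCoprime z (star z) := by
  obtain ⟨a, b, hab⟩ := h
  have hab' : (a : EisensteinInt) * z.norm + b * z.trace = 1 := mod_cast congrArg Int.cast hab
  refine ⟨a * star z + b, b, ?_⟩
  have htrace : (z.trace : EisensteinInt) = z + star z :=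
    QuadraticAlgebra.algebraMap_trace_eq_add_star z
  rw [← mul_star_eq_norm, htrace] at hab'
  linear_combination hab'

lemma exists_associated_cube_even_im {z : EisensteinInt} {n : ℤ} (hz : IsCoprime z (star z))
    (hn : z.norm = n ^ 3) : ∃ d : EisensteinInt, Associated (d ^ 3) z ∧ Even d.im := by
  let : GCDMonoid EisensteinInt := UniqueFactorizationMonoid.toGCDMonoid _
  obtain ⟨d, hd⟩ := exists_associated_pow_of_mul_eq_pow' hz (c := (n : EisensteinInt)) (k := 3)
    (by rw [mul_star_eq_norm, hn, Int.cast_pow])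
  obtain ⟨w, hw, him⟩ := exists_cube_eq_one_even_im_mul d
  exact ⟨w * d, by rwa [mul_pow, hw, one_mul], him⟩

end EisensteinInt

lemma not_isCoprime_of_prime_dvd {p a b : ℤ} (hp : Prime p) (ha : p ∣ a) (hb : p ∣ b) :
    ¬ IsCoprime a b :=
  fun h ↦ hp.not_isUnit (h.isUnit_of_dvd' ha hb)

lemma odd_of_sq_add_three_mul_sq_eq_cube {q r n : ℤ} (hqr : IsCoprime q r)
    (h : q ^ 2 + 3 * r ^ 2 = n ^ 3) : Odd n := by
  by_contra hn
  obtain ⟨k, rfl⟩ := (Int.not_odd_iff_even.1 hn).two_dvd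
  have h8 : q ^ 2 + 3 * r ^ 2 = 8 * k ^ 3 := by rw [h]; ring
  have hiff : Even q ↔ Even r := by
    have : Even (q ^ 2 + 3 * r ^ 2) := ⟨4 * k ^ 3, by rw [h8]; ring⟩
    simpa [parity_simps, show ¬ Even (3 : ℤ) by decide] using this
  rcases Int.even_or_odd q with hq | hq
  · exact not_isCoprime_of_prime_dvd Int.prime_two hq.two_dvd (hiff.1 hq).two_dvd hqr
  · have hr : Odd r := by rwa [← Int.not_even_iff_odd, ← hiff, Int.not_even_iff_odd]
    have hq8 := Int.eight_dvd_sq_sub_one_of_odd hq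
    have hr8 := Int.eight_dvd_sq_sub_one_of_odd hr
    lia

lemma not_three_dvd_of_sq_add_three_mul_sq_eq_cube {q r n : ℤ} (hqr : IsCoprime q r)
    (h : q ^ 2 + 3 * r ^ 2 = n ^ 3) : ¬ 3 ∣ q := by
  rintro ⟨a, rfl⟩
  obtain ⟨b, rfl⟩ : 3 ∣ n := Int.prime_three.dvd_of_dvd_pow (n := 3)
    ⟨3 * a ^ 2 + r ^ 2, by rw [← h]; ring⟩
  have hr : 3 ∣ r := Int.prime_three.dvd_of_dvd_pow (n := 2)
    ⟨3 * b ^ 3 - a ^ 2, by linarith⟩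
  exact not_isCoprime_of_prime_dvd Int.prime_three (dvd_mul_right 3 a) hr hqr

lemma isCoprime_cube_two_mul {q r n : ℤ} (hqr : IsCoprime q r)
    (h : q ^ 2 + 3 * r ^ 2 = n ^ 3) : IsCoprime (n ^ 3) (2 * q) := by
  have hn : IsCoprime n 2 := by
    obtain ⟨k, hk⟩ := odd_of_sq_add_three_mul_sq_eq_cube hqr h
    exact ⟨1, -k, by rw [hk]; ring⟩
  have h3 : IsCoprime 3 q := Int.prime_three.irreducible.coprime_iff_not_dvd.2
    (not_three_dvd_of_sq_add_three_mul_sq_eq_cube hqr h)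
  refine hn.pow_left.mul_right ?_
  rw [← h, add_comm, sq q]
  exact ((h3.mul_left hqr.symm.pow_left).add_mul_left_left q)

/-- In `ℤ[ω]` the factor `q + r√-3` is a unit times a cube, and the cube can be normalised to that
of some `s + t√-3`. -/
lemma exists_of_sq_add_three_mul_sq_eq_cube {q r n : ℤ} (hqr : IsCoprime q r)
    (h : q ^ 2 + 3 * r ^ 2 = n ^ 3) :
    ∃ s t : ℤ, q = s ^ 3 - 9 * s * t ^ 2 ∧ r = 3 * s ^ 2 * t - 3 * t ^ 3 := by
  let z : EisensteinInt := ⟨q + r, 2 * r⟩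
  have hnorm : z.norm = n ^ 3 := by rw [EisensteinInt.norm_eq, ← h]; ring
  have htrace : z.trace = 2 * q := by rw [QuadraticAlgebra.trace_def]; ring
  obtain ⟨d, ⟨u, hu⟩, t, ht⟩ := EisensteinInt.exists_associated_cube_even_im
    (EisensteinInt.isCoprime_star (hnorm ▸ htrace ▸ isCoprime_cube_two_mul hqr h)) hnorm
  obtain ⟨s, hs⟩ : ∃ s, d.re = s + t := ⟨d.re - t, by ring⟩
  have hre : (d ^ 3).re = (s ^ 3 - 9 * s * t ^ 2) + (3 * s ^ 2 * t - 3 * t ^ 3) := by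
    simp only [pow_three, QuadraticAlgebra.re_mul, QuadraticAlgebra.im_mul, ht, hs]
    ring
  have him : (d ^ 3).im = 2 * (3 * s ^ 2 * t - 3 * t ^ 3) := by
    simp only [pow_three, QuadraticAlgebra.re_mul, QuadraticAlgebra.im_mul, ht, hs]
    ring
  have hodd : Odd (d ^ 3).norm := by
    have hcube := congrArg QuadraticAlgebra.norm hu
    rw [map_mul, EisensteinInt.norm_unit, mul_one, hnorm] at hcube
    exact hcube ▸ (odd_of_sq_add_three_mul_sq_eq_cube hqr h).pow
  have hunit := EisensteinInt.unit_eq_one_or_neg_one (u := u) hodd (him ▸ even_two_mul _)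
    (hu ▸ even_two_mul r)
  have hzre : (d ^ 3 * u).re = q + r := congrArg QuadraticAlgebra.re hu
  have hzim : (d ^ 3 * u).im = 2 * r := congrArg QuadraticAlgebra.im hu
  rcases hunit with hunit | hunit
  · rw [hunit, mul_one] at hzre hzim
    exact ⟨s, t, by linarith, by linarith⟩
  · rw [hunit, mul_neg_one, QuadraticAlgebra.re_neg] at hzre
    rw [hunit, mul_neg_one, QuadraticAlgebra.im_neg] at hzim
    exact ⟨-s, -t, by linarith, by linarith⟩

lemma three_dvd_of_cube_add_cube {a b c : ℤ} (h : a ^ 3 + b ^ 3 = 4 * c ^ 3) : 3 ∣ c := by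
  have hmod9 : ∀ a b c : ZMod 9, a ^ 3 + b ^ 3 = 4 * c ^ 3 → c ^ 3 = 0 := by decide
  have hc := hmod9 a b c (mod_cast congrArg (Int.cast : ℤ → ZMod 9) h)
  rw [← Int.cast_pow, ZMod.intCast_zmod_eq_zero_iff_dvd] at hc
  exact Int.prime_three.dvd_of_dvd_pow (dvd_trans (by norm_num) hc)

lemma exists_half_sum_of_cube_add_cube {a b c : ℤ} (hab : IsCoprime a b)
    (h : a ^ 3 + b ^ 3 = 4 * c ^ 3) :
    ∃ p q : ℤ, IsCoprime p q ∧ Even p ∧ p * (p ^ 2 + 3 * q ^ 2) = 2 * c ^ 3 := by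
  have hsum : Even (a + b) := by
    have : Even (a ^ 3 + b ^ 3) := ⟨2 * c ^ 3, by rw [h]; ring⟩
    simpa [parity_simps] using this
  obtain ⟨p, hp⟩ := hsum.two_dvd
  obtain ⟨q, rfl⟩ : ∃ q, a = p + q := ⟨a - p, by ring⟩
  obtain rfl : b = p - q := by linarith
  have hpq : IsCoprime p q := by
    obtain ⟨u, v, huv⟩ := hab
    exact ⟨u + v, u - v, by rw [← huv]; ring⟩
  have heq : p * (p ^ 2 + 3 * q ^ 2) = 2 * c ^ 3 := by linarith
  refine ⟨p, q, hpq, ?_, heq⟩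
  by_contra hp
  have hq : Odd q := by
    by_contra hq
    have : Even (p * (p ^ 2 + 3 * q ^ 2)) := heq ▸ even_two_mul _
    simp [parity_simps, hp, hq] at this
  exact not_isCoprime_of_prime_dvd Int.prime_two
    ((Int.not_even_iff_odd.1 hp).add_odd hq).two_dvd
    ((Int.not_even_iff_odd.1 hp).sub_odd hq).two_dvd hab

lemma exists_coprime_of_cube_add_cube {a b c : ℤ} (hab : IsCoprime a b)
    (h : a ^ 3 + b ^ 3 = 4 * c ^ 3) :
    ∃ m q d : ℤ, IsCoprime (18 * m) q ∧ c = 3 * d ∧ m * (q ^ 2 + 3 * (6 * m) ^ 2) = d ^ 3 := by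
  obtain ⟨d, rfl⟩ := three_dvd_of_cube_add_cube h
  obtain ⟨p, q, hpq, hp2, heq⟩ := exists_half_sum_of_cube_add_cube hab h
  obtain ⟨p, rfl⟩ : 3 ∣ p := Int.prime_three.dvd_of_dvd_pow (n := 3)
    ⟨18 * d ^ 3 - p * q ^ 2, by linarith⟩
  have hq : ¬ 3 ∣ q := fun hq ↦
    not_isCoprime_of_prime_dvd Int.prime_three (dvd_mul_right 3 p) hq hpq
  have hp3 : 3 ∣ p := (Int.prime_three.dvd_or_dvd
    (⟨2 * d ^ 3 - p ^ 3, by linarith⟩ : 3 ∣ p * q ^ 2)).resolve_right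
    fun h3 ↦ hq (Int.prime_three.dvd_of_dvd_pow h3)
  obtain ⟨m, rfl⟩ : 6 ∣ p := by have := hp2.two_dvd; lia
  refine ⟨m, q, d, ?_, rfl, by linarith⟩
  rwa [show 18 * m = 3 * (6 * m) by ring]

lemma exists_param_of_mul_eq_cube {m q d : ℤ} (hmq : IsCoprime (18 * m) q)
    (h : m * (q ^ 2 + 3 * (6 * m) ^ 2) = d ^ 3) :
    ∃ s t e : ℤ, IsCoprime s (2 * t) ∧ t * ((s - 2 * t) * (s + 2 * t)) = e ^ 3 ∧ e ∣ d := by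
  have hmq' : IsCoprime m (q ^ 2 + 3 * (6 * m) ^ 2) := by
    rw [show q ^ 2 + 3 * (6 * m) ^ 2 = q ^ 2 + m * (108 * m) by ring]
    exact hmq.of_mul_left_right.pow_right.add_mul_left_right _
  obtain ⟨e, rfl⟩ := Int.eq_pow_of_mul_eq_pow_odd_left hmq' (by decide : Odd 3) h
  obtain ⟨n, hn⟩ := Int.eq_pow_of_mul_eq_pow_odd_right hmq' (by decide : Odd 3) h
  have h6 : IsCoprime q (6 * e ^ 3) := by
    rw [show 18 * e ^ 3 = 3 * (6 * e ^ 3) by ring] at hmq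
    exact hmq.of_mul_left_right.symm
  obtain ⟨s, t, rfl, ht⟩ := exists_of_sq_add_three_mul_sq_eq_cube h6 hn
  have hst : IsCoprime s t := by
    rw [ht, show s ^ 3 - 9 * s * t ^ 2 = s * (s ^ 2 - 9 * t ^ 2) by ring,
      show 3 * s ^ 2 * t - 3 * t ^ 3 = t * (3 * s ^ 2 - 3 * t ^ 2) by ring] at h6
    exact h6.of_mul_left_left.of_mul_right_left
  have hodd : Odd (s ^ 3 - 9 * s * t ^ 2) := Int.not_even_iff_odd.1 fun he ↦
    not_isCoprime_of_prime_dvd Int.prime_two he.two_dvd ⟨3 * e ^ 3, by ring⟩ h6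
  obtain ⟨t, rfl⟩ : 2 ∣ t := by
    rw [← Int.not_even_iff_odd] at hodd
    simp only [parity_simps, show ¬ Even (9 : ℤ) by decide] at hodd
    exact even_iff_two_dvd.1 (by tauto)
  refine ⟨s, t, e, hst, by linarith, ?_⟩
  rw [← Int.pow_dvd_pow_iff three_ne_zero, ← h]
  exact dvd_mul_right _ _

lemma exists_smaller_cube_add_cube {s t e : ℤ} (hst : IsCoprime s (2 * t))
    (h : t * ((s - 2 * t) * (s + 2 * t)) = e ^ 3) :
    ∃ a b c : ℤ, IsCoprime a b ∧ a ^ 3 + b ^ 3 = 4 * c ^ 3 ∧ c ∣ e := by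
  have hts : IsCoprime t s := hst.of_mul_right_right.symm
  have hsub : IsCoprime t (s - 2 * t) := by
    rw [show s - 2 * t = s + t * (-2) by ring]; exact hts.add_mul_left_right _
  have hadd : IsCoprime t (s + 2 * t) := by
    rw [show s + 2 * t = s + t * 2 by ring]; exact hts.add_mul_left_right _
  have hsa : IsCoprime (s - 2 * t) (s + 2 * t) := by
    have h2 : IsCoprime (s - 2 * t) 2 := by
      rw [show s - 2 * t = s + 2 * (-t) by ring]
      exact hst.of_mul_right_left.add_mul_left_left _
    rw [show s + 2 * t = 2 * (2 * t) + (s - 2 * t) * 1 by ring]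
    exact (h2.mul_right (h2.mul_right hsub.symm)).add_mul_left_right _
  have hprod := hsub.mul_right hadd
  obtain ⟨c, rfl⟩ := Int.eq_pow_of_mul_eq_pow_odd_left hprod (by decide : Odd 3) h
  obtain ⟨g, hg⟩ := Int.eq_pow_of_mul_eq_pow_odd_right hprod (by decide : Odd 3) h
  obtain ⟨b, hb⟩ := Int.eq_pow_of_mul_eq_pow_odd_left hsa (by decide : Odd 3) hg
  obtain ⟨a, ha⟩ := Int.eq_pow_of_mul_eq_pow_odd_right hsa (by decide : Odd 3) hg
  refine ⟨a, -b, c, ?_, by linear_combination hb - ha, ?_⟩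
  · rw [ha, hb, IsCoprime.pow_iff three_pos three_pos] at hsa
    exact hsa.symm.neg_right
  · rw [← Int.pow_dvd_pow_iff three_ne_zero, ← h]
    exact dvd_mul_right _ _

lemma eq_zero_of_isCoprime_cube_add_cube {a b c : ℤ} (hab : IsCoprime a b)
    (h : a ^ 3 + b ^ 3 = 4 * c ^ 3) : c = 0 := by
  induction hN : c.natAbs using Nat.strong_induction_on generalizing a b c with
  | _ N ih =>
  obtain ⟨m, q, d, hmq, rfl, hd⟩ := exists_coprime_of_cube_add_cube hab h
  obtain ⟨s, t, e, hst, he, hed⟩ := exists_param_of_mul_eq_cube hmq hd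
  obtain ⟨a', b', c', hab', h', hc'⟩ := exists_smaller_cube_add_cube hst he
  have hdvd : c' ∣ d := hc'.trans hed
  by_contra hd0
  have hle := Nat.le_of_dvd (by lia) (Int.natAbs_dvd_natAbs.2 hdvd)
  have hc0 : c' = 0 := ih _ (by lia) hab' h' rfl
  rw [hc0, zero_dvd_iff] at hdvd
  exact hd0 (by rw [hdvd, mul_zero])

theorem eq_zero_of_cube_add_cube_eq_four_mul_cube {a b c : ℤ} (h : a ^ 3 + b ^ 3 = 4 * c ^ 3) :
    c = 0 := by
  rcases Nat.eq_zero_or_pos (Int.gcd a b) with hg | hg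
  · obtain ⟨rfl, rfl⟩ := Int.gcd_eq_zero_iff.1 hg
    simpa using h.symm
  obtain ⟨a', b', hab, ha, hb⟩ := Int.exists_gcd_one hg
  have hg0 : (Int.gcd a b : ℤ) ≠ 0 := by lia
  generalize (Int.gcd a b : ℤ) = g at ha hb hg0
  obtain ⟨k, hk⟩ : g ∣ 2 * c := by
    rw [← Int.pow_dvd_pow_iff three_ne_zero]
    exact ⟨2 * (a' ^ 3 + b' ^ 3), by rw [ha, hb] at h; linear_combination -2 * h⟩
  have hk3 : k ^ 3 = 2 * (a' ^ 3 + b' ^ 3) := by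
    refine mul_left_cancel₀ (pow_ne_zero 3 hg0) ?_
    calc g ^ 3 * k ^ 3 = (2 * c) ^ 3 := by rw [hk]; ring
      _ = g ^ 3 * (2 * (a' ^ 3 + b' ^ 3)) := by rw [ha, hb] at h; linear_combination -2 * h
  obtain ⟨l, rfl⟩ : 2 ∣ k := Int.prime_two.dvd_of_dvd_pow ⟨_, hk3⟩
  have hl : l = 0 := eq_zero_of_isCoprime_cube_add_cube (Int.isCoprime_iff_gcd_eq_one.2 hab)
    (by linarith : a' ^ 3 + b' ^ 3 = 4 * l ^ 3)
  rw [hl] at hk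
  lia

lemma cube_add_cube_ne_four (u w : ℚ) : u ^ 3 + w ^ 3 ≠ 4 := by
  intro h
  have hden : ((u.den * w.den : ℕ) : ℤ) ≠ 0 := mod_cast mul_ne_zero u.den_ne_zero w.den_ne_zero
  refine hden (eq_zero_of_cube_add_cube_eq_four_mul_cube
    (a := u.num * w.den) (b := w.num * u.den) ?_)
  rw [← u.num_div_den, ← w.num_div_den] at h
  field_simp at h
  exact mod_cast (by linear_combination h :
    (u.num * w.den : ℚ) ^ 3 + (w.num * u.den) ^ 3 = 4 * (u.den * w.den) ^ 3)

lemma sq_ne_cube_sub (x y : ℚ) : y ^ 2 ≠ x ^ 3 - 108 := by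
  intro h
  have hx : x ≠ 0 := by
    rintro rfl
    linarith [sq_nonneg y]
  apply cube_add_cube_ne_four ((18 + y) / (3 * x)) ((18 - y) / (3 * x))
  field_simp
  linear_combination 108 * h

/-! ### The elliptic curve `y² = x(x² - 2x + 5)` -/

lemma exists_eq_pow_of_mul_eq_pow_of_nonneg {u w b : ℤ} {k : ℕ} (hk : Even k)
    (huw : IsCoprime u w) (hu : 0 ≤ u) (h : u * w = b ^ k) : ∃ r : ℤ, u = r ^ k := by
  obtain ⟨r, hr⟩ := exists_associated_pow_of_mul_eq_pow' huw h
  exact ⟨r, (Int.eq_of_associated_of_nonneg hr (hk.pow_nonneg r) hu).symm⟩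

lemma exists_eq_pow_four_of_mul_eq_pow_four {u w b : ℤ} (huw : IsCoprime u w) (hu : 0 ≤ u)
    (hw : 0 ≤ w) (h : u * w = b ^ 4) :
    ∃ r s : ℤ, u = r ^ 4 ∧ w = s ^ 4 ∧ r ^ 2 * s ^ 2 = b ^ 2 := by
  obtain ⟨r, rfl⟩ := exists_eq_pow_of_mul_eq_pow_of_nonneg (by decide) huw hu h
  obtain ⟨s, rfl⟩ := exists_eq_pow_of_mul_eq_pow_of_nonneg (by decide) huw.symm hw
    ((mul_comm _ _).trans h)
  refine ⟨r, s, rfl, rfl, ?_⟩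
  rw [← pow_left_inj₀ (by positivity) (by positivity) two_ne_zero]
  linear_combination h

lemma exists_add_eq_of_mul_eq_five_mul_pow_four {u w b : ℤ} (huw : IsCoprime u w) (hu : 0 ≤ u)
    (hw : 0 ≤ w) (h : u * w = 5 * b ^ 4) :
    ∃ r s : ℤ, IsCoprime r s ∧ r ^ 2 * s ^ 2 = b ^ 2 ∧ u + w = r ^ 4 + 5 * s ^ 4 := by
  wlog h5 : 5 ∣ w generalizing u w
  · obtain ⟨r, s, hrs⟩ := this huw.symm hw hu ((mul_comm w u).trans h)
      ((Int.prime_ofNat_iff.2 Nat.prime_five).dvd_or_dvd ⟨_, h⟩ |>.resolve_right h5)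
    exact ⟨r, s, add_comm w u ▸ hrs⟩
  obtain ⟨w, rfl⟩ := h5
  obtain ⟨r, s, rfl, rfl, hb⟩ := exists_eq_pow_four_of_mul_eq_pow_four huw.of_mul_right_right hu
    (by linarith) (by linarith : u * w = b ^ 4)
  exact ⟨r, s, (IsCoprime.pow_iff four_pos four_pos).1 huw.of_mul_right_right, hb, rfl⟩

lemma nonneg_of_add_nonneg_of_mul_pos {u v : ℤ} (hadd : 0 ≤ u + v) (hmul : 0 < u * v) :
    0 ≤ u ∧ 0 ≤ v := by
  rcases mul_pos_iff.1 hmul with h | h <;> constructor <;> linarith [h.1, h.2]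

lemma prime_dvd_of_sq_dvd_five_mul_pow_four {p n : ℤ} (hp : Prime p) (h : p ^ 2 ∣ 5 * n ^ 4) :
    p ∣ n := by
  by_contra hn
  have hcop : IsCoprime (p ^ 2) (n ^ 4) := (hp.irreducible.coprime_iff_not_dvd.2 hn).pow
  have h5 : Squarefree (5 : ℤ) := (Int.prime_ofNat_iff.2 Nat.prime_five).squarefree
  exact hp.not_isUnit (h5 p (sq p ▸ hcop.dvd_of_dvd_mul_right h))

lemma exists_quartic_of_mul_eq_five_mul_pow_four {u v n s : ℤ} (hns : IsCoprime n s) (hs : s ≠ 0)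
    (hadd : u + v = n ^ 2 + 2 * s ^ 2) (hmul : u * v = 5 * s ^ 4) :
    ∃ a b : ℤ, IsCoprime a b ∧ a ^ 2 * b ^ 2 = s ^ 2 ∧
      a ^ 4 - 2 * a ^ 2 * b ^ 2 + 5 * b ^ 4 = n ^ 2 := by
  have hmul_pos : 0 < u * v := by rw [hmul]; positivity
  obtain ⟨hu, hv⟩ := nonneg_of_add_nonneg_of_mul_pos (by rw [hadd]; positivity) hmul_pos
  have huv : IsCoprime u v := by
    refine isCoprime_of_prime_dvd (fun h ↦ hmul_pos.ne' (by simp [h.1])) fun p hp hpu hpv ↦ ?_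
    have hps : p ∣ s := prime_dvd_of_sq_dvd_five_mul_pow_four hp
      (by rw [← hmul, sq]; exact mul_dvd_mul hpu hpv)
    have hpn : p ∣ n ^ 2 := by
      rw [show n ^ 2 = u + v - s * (2 * s) by linarith]
      exact dvd_sub (dvd_add hpu hpv) (hps.mul_right _)
    exact not_isCoprime_of_prime_dvd hp (hp.dvd_of_dvd_pow hpn) hps hns
  obtain ⟨a, b, hab, habs, hsum⟩ := exists_add_eq_of_mul_eq_five_mul_pow_four huv hu hv hmul
  exact ⟨a, b, hab, habs, by linarith⟩

lemma exists_of_quartic_eq_sq {a b c : ℤ} (hab : IsCoprime a b) (hb : b ≠ 0)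
    (h : a ^ 4 - 2 * a ^ 2 * b ^ 2 + 5 * b ^ 4 = c ^ 2) :
    ∃ r s : ℤ, IsCoprime r s ∧ r ^ 2 * s ^ 2 = b ^ 2 ∧ a ^ 2 = r ^ 4 + r ^ 2 * s ^ 2 - s ^ 4 := by
  wlog hc : 0 ≤ c generalizing c with H
  · exact H (c := -c) (by rw [h]; ring) (by linarith)
  have hb4 : 0 < b ^ 4 := by positivity
  have heven : Even (c - (a ^ 2 - b ^ 2)) := by
    have : Even ((c - (a ^ 2 - b ^ 2)) * (c + (a ^ 2 - b ^ 2))) := ⟨2 * b ^ 4, by linarith⟩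
    grind
  obtain ⟨w, hw⟩ := heven.two_dvd
  obtain ⟨u, hu⟩ : ∃ u, u = w + (a ^ 2 - b ^ 2) := ⟨_, rfl⟩
  have huw : u * w = b ^ 4 := by
    obtain rfl : c = 2 * w + (a ^ 2 - b ^ 2) := by linarith
    rw [hu]
    linarith
  obtain ⟨hu0, hw0⟩ := nonneg_of_add_nonneg_of_mul_pos (by linarith : 0 ≤ u + w) (huw ▸ hb4)
  have hcop : IsCoprime u w := by
    refine isCoprime_of_prime_dvd (fun h0 ↦ hb4.ne' (by simp [← huw, h0.1])) fun p hp hpu hpw ↦ ?_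
    have hpb : p ∣ b := hp.dvd_of_dvd_pow (huw ▸ hpu.mul_right w)
    have hpa : p ∣ a ^ 2 := by
      rw [show a ^ 2 = u - w + b * b by linarith]
      exact dvd_add (dvd_sub hpu hpw) (hpb.mul_right b)
    exact not_isCoprime_of_prime_dvd hp (hp.dvd_of_dvd_pow hpa) hpb hab
  obtain ⟨r, s, rfl, rfl, hrs⟩ := exists_eq_pow_four_of_mul_eq_pow_four hcop hu0 hw0 huw
  exact ⟨r, s, (IsCoprime.pow_iff four_pos four_pos).1 hcop, hrs, by linarith⟩

lemma odd_of_sq_eq_pow_four_add {a r s : ℤ} (hrs : IsCoprime r s)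
    (h : a ^ 2 = r ^ 4 + r ^ 2 * s ^ 2 - s ^ 4) : Odd r := by
  by_contra hr
  obtain ⟨k, rfl⟩ := (Int.not_odd_iff_even.1 hr).two_dvd
  have hs : Odd s := Int.not_even_iff_odd.1 fun hs ↦
    not_isCoprime_of_prime_dvd Int.prime_two (dvd_mul_right 2 k) hs.two_dvd hrs
  have ha : Odd a := by
    rw [← Int.odd_pow' two_ne_zero (m := a), h]
    simp [parity_simps, Int.not_even_iff_odd.2 hs]
  have ha4 := Int.sq_mod_four_eq_one_of_odd ha
  have hs4 := Int.sq_mod_four_eq_one_of_odd (hs.pow (n := 2))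
  have : a ^ 2 + (s ^ 2) ^ 2 = 4 * (4 * k ^ 4 + k ^ 2 * s ^ 2) := by rw [h]; ring
  lia

lemma exists_quartic_of_even {a r s : ℤ} (hrs : IsCoprime r s) (hs : s ≠ 0)
    (h : a ^ 2 = r ^ 4 + r ^ 2 * s ^ 2 - s ^ 4) (hs2 : Even s) :
    ∃ α β : ℤ, IsCoprime α β ∧ 4 * (α ^ 2 * β ^ 2) = s ^ 2 ∧
      α ^ 4 - 2 * α ^ 2 * β ^ 2 + 5 * β ^ 4 = r ^ 2 := by
  obtain ⟨w, rfl⟩ := hs2.two_dvd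
  have hr := odd_of_sq_eq_pow_four_add hrs h
  have ha : Odd a := by
    rw [← Int.odd_pow' two_ne_zero (m := a), h]
    simp [parity_simps, hr]
  have heven : Even (r ^ 2 + 2 * w ^ 2 - a) := by
    simp [parity_simps, Int.not_even_iff_odd.2 hr, Int.not_even_iff_odd.2 ha]
  obtain ⟨u, hu⟩ := heven.two_dvd
  obtain ⟨α, β, hαβ, hw, hq⟩ := exists_quartic_of_mul_eq_five_mul_pow_four (u := u) (v := u + a)
    hrs.of_mul_right_right (right_ne_zero_of_mul hs) (by linarith) (by
      obtain rfl : a = r ^ 2 + 2 * w ^ 2 - 2 * u := by linarith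
      linarith)
  exact ⟨α, β, hαβ, by rw [hw]; ring, hq⟩

lemma exists_quartic_of_odd {a r s : ℤ} (hrs : IsCoprime r s)
    (h : a ^ 2 = r ^ 4 + r ^ 2 * s ^ 2 - s ^ 4) (hs : Odd s) :
    ∃ α β : ℤ, IsCoprime α β ∧ α ^ 2 * β ^ 2 = s ^ 2 ∧
      α ^ 4 - 2 * α ^ 2 * β ^ 2 + 5 * β ^ 4 = (2 * r) ^ 2 := by
  have h2s : IsCoprime 2 s := Int.prime_two.irreducible.coprime_iff_not_dvd.2
    (by rwa [← even_iff_two_dvd, Int.not_even_iff_odd])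
  exact exists_quartic_of_mul_eq_five_mul_pow_four (u := 2 * r ^ 2 + s ^ 2 - 2 * a)
    (v := 2 * r ^ 2 + s ^ 2 + 2 * a) (h2s.mul_left hrs) (by rintro rfl; simp at hs) (by ring)
    (by linear_combination -4 * h)

lemma sq_eq_one_of_quartic_eq_of_le {α β r : ℤ} (hβ : β ≠ 0)
    (hle : r ^ 2 * (α ^ 2 * β ^ 2) ≤ β ^ 2) (hr : r ^ 2 * (α ^ 2 * β ^ 2) ≠ 0)
    (hq : α ^ 4 - 2 * α ^ 2 * β ^ 2 + 5 * β ^ 4 = (2 * r) ^ 2) :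
    r ^ 2 = 1 ∧ α ^ 2 = 1 ∧ β ^ 2 = 1 := by
  have hr0 : 0 < r ^ 2 := (sq_nonneg r).lt_of_ne' (left_ne_zero_of_mul hr)
  have hα0 : 0 < α ^ 2 :=
    (sq_nonneg α).lt_of_ne' (left_ne_zero_of_mul (right_ne_zero_of_mul hr))
  have hβ0 : 0 < β ^ 2 := by positivity
  have hrα : r ^ 2 * α ^ 2 ≤ 1 := le_of_mul_le_mul_right (by linarith) hβ0
  have hr1 : r ^ 2 = 1 := by nlinarith
  have hα1 : α ^ 2 = 1 := by nlinarith
  refine ⟨hr1, hα1, ?_⟩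
  have h0 : (β ^ 2 - 1) * (5 * β ^ 2 + 3) = 0 := by
    linear_combination hq + 4 * hr1 - (α ^ 2 + 1 - 2 * β ^ 2) * hα1
  exact sub_eq_zero.1 ((mul_eq_zero.1 h0).resolve_right (by positivity))

theorem sq_eq_one_of_quartic_eq_sq {a b c : ℤ} (hab : IsCoprime a b) (hb : b ≠ 0)
    (h : a ^ 4 - 2 * a ^ 2 * b ^ 2 + 5 * b ^ 4 = c ^ 2) : a ^ 2 = 1 ∧ b ^ 2 = 1 := by
  induction hN : b.natAbs using Nat.strong_induction_on generalizing a b c with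
  | _ N ih =>
  obtain ⟨r, s, hrs, hb2, ha2⟩ := exists_of_quartic_eq_sq hab hb h
  have hrs0 : r ^ 2 * s ^ 2 ≠ 0 := hb2 ▸ pow_ne_zero 2 hb
  have hr0 : 0 < r ^ 2 := by have := left_ne_zero_of_mul hrs0; positivity
  have hs0 : 0 < s ^ 2 := by have := right_ne_zero_of_mul hrs0; positivity
  rcases Int.even_or_odd s with hs | hs
  · obtain ⟨α, β, hαβ, hs2, hq⟩ := exists_quartic_of_even hrs (by simpa using hs0.ne') ha2 hs
    have hα0 : 0 < α ^ 2 := by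
      have : α ≠ 0 := by rintro rfl; simp at hs2; lia
      positivity
    have hβ0 : β ≠ 0 := by rintro rfl; simp at hs2; lia
    have hlt : β ^ 2 < b ^ 2 := by nlinarith [sq_nonneg β]
    obtain ⟨hα, hβ⟩ := ih _ (hN ▸ Int.natAbs_lt_iff_sq_lt.2 hlt) hαβ hβ0 hq rfl
    have hr4 : r ^ 2 = 4 := by
      linear_combination (α ^ 2 + 1 - 2 * β ^ 2) * hα + (5 * β ^ 2 + 3) * hβ - hq
    have := Int.sq_mod_four_eq_one_of_odd (odd_of_sq_eq_pow_four_add hrs ha2)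
    lia
  · obtain ⟨α, β, hαβ, hs2, hq⟩ := exists_quartic_of_odd hrs ha2 hs
    have hβ0 : β ≠ 0 := by rintro rfl; simp [← hs2] at hs0
    obtain ⟨hr1, hα1, hβ1⟩ : r ^ 2 = 1 ∧ α ^ 2 = 1 ∧ β ^ 2 = 1 := by
      by_cases hlt : β ^ 2 < b ^ 2
      · obtain ⟨hα, hβ⟩ := ih _ (hN ▸ Int.natAbs_lt_iff_sq_lt.2 hlt) hαβ hβ0 hq rfl
        refine ⟨?_, hα, hβ⟩
        linarith [show 4 * r ^ 2 = 4 by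
          linear_combination (α ^ 2 + 1 - 2 * β ^ 2) * hα + (5 * β ^ 2 + 3) * hβ - hq]
      · exact sq_eq_one_of_quartic_eq_of_le hβ0 (by rw [hs2, hb2]; exact not_lt.1 hlt)
          (by rwa [hs2]) hq
    have hs1 : s ^ 2 = 1 := by rw [← hs2, hα1, hβ1, one_mul]
    exact ⟨by linear_combination ha2 + (r ^ 2 + 1 + s ^ 2) * hr1 - s ^ 2 * hs1,
      by rw [← hb2, hr1, hs1, one_mul]⟩

lemma eq_one_of_isSquare_mul {m n : ℤ} (hm : 0 < m) (hn : 0 < n) (hmn : IsCoprime m n)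
    (h5 : ¬ 5 ∣ m) (h : IsSquare (m * n * (m ^ 2 - 2 * m * n + 5 * n ^ 2))) : m = 1 ∧ n = 1 := by
  obtain ⟨y, hy⟩ := (isSquare_iff_exists_sq _).1 h
  generalize hT : m ^ 2 - 2 * m * n + 5 * n ^ 2 = T at hy
  have hT0 : 0 ≤ T := by rw [← hT]; linarith [sq_nonneg (m - n), sq_nonneg n]
  have hmT : IsCoprime m T := by
    rw [← hT, show m ^ 2 - 2 * m * n + 5 * n ^ 2 = 5 * n ^ 2 + m * (m - 2 * n) by ring]
    have hm5 : IsCoprime m 5 :=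
      ((Int.prime_ofNat_iff.2 Nat.prime_five).irreducible.coprime_iff_not_dvd.2 h5).symm
    exact (hm5.mul_right hmn.pow_right).add_mul_left_right _
  have hnT : IsCoprime n T := by
    rw [← hT, show m ^ 2 - 2 * m * n + 5 * n ^ 2 = m ^ 2 + n * (5 * n - 2 * m) by ring]
    exact hmn.symm.pow_right.add_mul_left_right _
  obtain ⟨a, rfl⟩ := exists_eq_pow_of_mul_eq_pow_of_nonneg (w := n * T) (b := y) even_two
    (hmn.mul_right hmT) hm.le (by linear_combination hy)
  obtain ⟨b, rfl⟩ := exists_eq_pow_of_mul_eq_pow_of_nonneg (w := a ^ 2 * T) (b := y) even_two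
    (hmn.symm.mul_right hnT) hn.le (by linear_combination hy)
  obtain ⟨c, rfl⟩ := exists_eq_pow_of_mul_eq_pow_of_nonneg (w := a ^ 2 * b ^ 2) (b := y)
    even_two (hmT.symm.mul_right hnT.symm) hT0 (by linear_combination hy)
  exact sq_eq_one_of_quartic_eq_sq (c := c) ((IsCoprime.pow_iff two_pos two_pos).1 hmn)
    (by simpa using hn.ne') (by linear_combination hT)

theorem eq_zero_or_one_or_five_of_sq_eq {x y : ℚ} (h : y ^ 2 = x * (x ^ 2 - 2 * x + 5)) :
    x = 0 ∨ x = 1 ∨ x = 5 := by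
  refine or_iff_not_imp_left.2 fun hx0 ↦ ?_
  have hx : 0 < x := by
    have hT : 0 < x ^ 2 - 2 * x + 5 := by linarith [sq_nonneg (x - 1)]
    exact (pos_iff_pos_of_mul_pos (h ▸ sq_pos_of_ne_zero fun hy ↦
      mul_ne_zero hx0 hT.ne' (by rw [← h, hy, zero_pow two_ne_zero]))).2 hT
  have hm : 0 < x.num := Rat.num_pos.2 hx
  have hn : (0 : ℤ) < x.den := mod_cast x.den_pos
  have hmn : IsCoprime x.num x.den := Rat.isCoprime_num_den x
  have hsq : IsSquare (x.num * x.den * (x.num ^ 2 - 2 * x.num * x.den + 5 * x.den ^ 2)) := by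
    rw [← Rat.isSquare_intCast_iff]
    rw [← x.num_div_den] at h
    field_simp at h
    exact ⟨y * x.den ^ 2, by push_cast; linear_combination -(x.den : ℚ) * h⟩
  by_cases h5 : 5 ∣ x.num
  · right
    obtain ⟨m, hm5⟩ := h5
    rw [hm5] at hmn hm hsq
    have hn5 : ¬ (5 : ℤ) ∣ x.den := fun hdvd ↦ not_isCoprime_of_prime_dvd
      (Int.prime_ofNat_iff.2 Nat.prime_five) (dvd_mul_right 5 m) hdvd hmn
    have hsq' : IsSquare (x.den * m * ((x.den : ℤ) ^ 2 - 2 * x.den * m + 5 * m ^ 2)) := by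
      obtain ⟨y, hy⟩ := hsq
      obtain ⟨z, rfl⟩ : 5 ∣ y := (Int.prime_ofNat_iff.2 Nat.prime_five).dvd_of_dvd_pow (n := 2)
        ⟨m * x.den * ((5 * m) ^ 2 - 2 * (5 * m) * x.den + 5 * x.den ^ 2), by linear_combination -hy⟩
      exact ⟨z, by linarith⟩
    obtain ⟨hd1, rfl⟩ := eq_one_of_isSquare_mul hn (by linarith) hmn.of_mul_left_right.symm hn5 hsq'
    rw [← x.num_div_den, hm5, ← Int.cast_natCast x.den, hd1]
    norm_num
  · obtain ⟨hm1, hn1⟩ := eq_one_of_isSquare_mul hm hn hmn h5 hsq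
    left
    rw [← x.num_div_den, hm1, ← Int.cast_natCast x.den, hn1]
    norm_num

/-! ### The genus two curve `y² = ((x + 4)² + 4)(x³ - 108)` -/

section JacobiSymbol

open NumberTheorySymbols

lemma jacobiSym_mul_sq {D y : ℤ} {n : ℕ} (hy : IsCoprime y n) : J(D * y ^ 2 | n) = J(D | n) := by
  rw [jacobiSym.mul_left, jacobiSym.sq_one' (Int.isCoprime_iff_gcd_eq_one.1 hy), mul_one]

lemma jacobiSym_eq_of_modEq_mul_sq {N D y : ℤ} {n : ℕ} (h : N ≡ D * y ^ 2 [ZMOD n])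
    (hy : IsCoprime y n) : J(N | n) = J(D | n) := by
  rw [jacobiSym.mod_left' h, jacobiSym_mul_sq hy]

lemma jacobiSym_eq_one_of_dvd_sq_sub_mul_sq {D x y : ℤ} {n : ℕ} (hx : IsCoprime x n)
    (h : (n : ℤ) ∣ x ^ 2 - D * y ^ 2) : J(D | n) = 1 := by
  have hy : IsCoprime y n := by
    obtain ⟨k, hk⟩ := h
    have hDy : IsCoprime (D * y ^ 2) n := by
      rw [show D * y ^ 2 = x ^ 2 + n * -k by linear_combination -hk]
      exact hx.pow_left.add_mul_left_left _
    exact (IsCoprime.pow_left_iff two_pos).1 hDy.of_mul_left_right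
  rw [← jacobiSym_mul_sq hy, jacobiSym.mod_left' (Int.modEq_iff_dvd.2 h),
    jacobiSym.sq_one' (Int.isCoprime_iff_gcd_eq_one.1 hx)]

lemma jacobiSym_eq_one_of_dvd_sq_sub_mul_sq' {D x y : ℤ} {n : ℕ} (hDy : IsCoprime (D * y) n)
    (h : (n : ℤ) ∣ x ^ 2 - D * y ^ 2) : J(D | n) = 1 := by
  refine jacobiSym_eq_one_of_dvd_sq_sub_mul_sq ((IsCoprime.pow_left_iff two_pos).1 ?_) h
  obtain ⟨k, hk⟩ := h
  rw [show x ^ 2 = D * y * y + n * k by linear_combination hk]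
  exact (hDy.mul_left hDy.of_mul_left_right).add_mul_left_left _

end JacobiSymbol

lemma exists_squarefree_mul_sq_of_mul_eq_sq {A B f : ℤ} (hA : 0 < A) (h : A * B = f ^ 2) :
    ∃ (k : ℕ) (a b : ℤ), Squarefree k ∧ A = k * a ^ 2 ∧ B = k * b ^ 2 := by
  lift A to ℕ using hA.le
  obtain ⟨k, a, rfl, hk⟩ := Nat.sq_mul_squarefree A
  have hk0 : (k : ℤ) ≠ 0 := by rintro h0; simp [h0] at hA
  have ha0 : (a : ℤ) ≠ 0 := by rintro h0; simp [h0] at hA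
  push_cast at h
  obtain ⟨g, rfl⟩ : (a : ℤ) ∣ f :=
    (Int.pow_dvd_pow_iff two_ne_zero).1 ⟨k * B, by linear_combination -h⟩
  have hg : (k : ℤ) * B = g ^ 2 :=
    mul_left_cancel₀ (pow_ne_zero 2 ha0) (by linear_combination h)
  obtain ⟨b, rfl⟩ : (k : ℤ) ∣ g :=
    ((Int.squarefree_natCast.2 hk).dvd_pow_iff_dvd two_ne_zero).1 ⟨B, hg.symm⟩
  exact ⟨k, a, b, hk, by push_cast; ring, mul_left_cancel₀ hk0 (by linear_combination hg)⟩

section GenusTwoCurve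

variable {X e a b : ℤ}

lemma mod_eight_of_odd {q : ℤ} (hX : Odd X)
    (hA : X ^ 2 + 8 * X * e ^ 2 + 20 * e ^ 4 = q * a ^ 2) (hB : X ^ 3 - 108 * e ^ 6 = q * b ^ 2) :
    X % 8 = 1 ∧ (q - 4 * e) % 8 = 1 := by
  have ha : Odd a := by
    have : Odd (q * a ^ 2) := by
      rw [← hA, show X ^ 2 + 8 * X * e ^ 2 + 20 * e ^ 4
        = X ^ 2 + 2 * (4 * X * e ^ 2 + 10 * e ^ 4) by ring]
      exact hX.pow.add_even (even_two_mul _)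
    exact (Int.odd_pow' two_ne_zero).1 (Int.odd_mul.1 this).2
  have hb : Odd b := by
    have : Odd (q * b ^ 2) := by
      rw [← hB, show 108 * e ^ 6 = 2 * (54 * e ^ 6) by ring]
      exact hX.pow.sub_even (even_two_mul _)
    exact (Int.odd_pow' two_ne_zero).1 (Int.odd_mul.1 this).2
  obtain ⟨i, hi⟩ := Int.eight_dvd_sq_sub_one_of_odd hX
  obtain ⟨j, hj⟩ := Int.eight_dvd_sq_sub_one_of_odd ha
  obtain ⟨l, hl⟩ := Int.eight_dvd_sq_sub_one_of_odd hb
  have he4 : (e ^ 4 - e) % 2 = 0 := Int.even_iff.1 (by simp [parity_simps])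
  have he6 : (e ^ 6 - e) % 2 = 0 := Int.even_iff.1 (by simp [parity_simps])
  have hA8 : 8 * (i + X * e ^ 2 - q * j) + 1 + 20 * e ^ 4 = q := by
    linear_combination hA - hi + q * hj
  have hB8 : 8 * (X * i - q * l) + X - 108 * e ^ 6 = q := by
    linear_combination hB - X * hi + q * hl
  lia

lemma odd_of_isCoprime_of_even (hXe : IsCoprime X e) (hX : Even X) : Odd e :=
  Int.not_even_iff_odd.1 fun he ↦
    not_isCoprime_of_prime_dvd Int.prime_two hX.two_dvd he.two_dvd hXe

lemma exists_two_mul_cube_mod_eight {q : ℤ} (hX : Even X) (he : Odd e) (hq : Odd q)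
    (hB : X ^ 3 - 108 * e ^ 6 = q * b ^ 2) : ∃ y : ℤ, X = 2 * y ∧ 2 * y ^ 3 % 8 = (q + 3) % 8 := by
  obtain ⟨y, rfl⟩ := hX.two_dvd
  have hb : Even (q * b ^ 2) := ⟨4 * y ^ 3 - 54 * e ^ 6, by linarith⟩
  obtain ⟨d, rfl⟩ : 2 ∣ b := ((Int.even_pow' two_ne_zero).1
    ((Int.even_mul.1 hb).resolve_left (Int.not_even_iff_odd.2 hq))).two_dvd
  have hqd : q * d ^ 2 = 2 * y ^ 3 - 27 * e ^ 6 := by linarith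
  have hd : Odd d := by
    have : Odd (q * d ^ 2) := by
      rw [hqd]
      exact (even_two_mul _).sub_odd ((by decide : Odd (27 : ℤ)).mul he.pow)
    exact (Int.odd_pow' two_ne_zero).1 (Int.odd_mul.1 this).2
  obtain ⟨i, hi⟩ := Int.eight_dvd_sq_sub_one_of_odd hd
  obtain ⟨j, hj⟩ := Int.eight_dvd_sq_sub_one_of_odd (he.pow (n := 3))
  have h8 : 2 * y ^ 3 = q + 27 + 8 * (q * i + 27 * j) := by
    linear_combination -hqd + q * hi + 27 * hj
  exact ⟨y, rfl, by lia⟩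

lemma sub_ne_two_mul_of_isCoprime {k : ℤ} (hXe : IsCoprime X e) (hk : Odd k) :
    X ^ 3 - 108 * e ^ 6 ≠ 2 * k * b ^ 2 := by
  intro hB
  have hX : Even X := (Int.even_pow' three_ne_zero).1 ⟨k * b ^ 2 + 54 * e ^ 6, by linarith⟩
  have he := odd_of_isCoprime_of_even hXe hX
  obtain ⟨y, rfl⟩ := hX.two_dvd
  have hb : Even (k * b ^ 2) := ⟨2 * y ^ 3 - 27 * e ^ 6, by linarith⟩
  obtain ⟨d, rfl⟩ : 2 ∣ b := ((Int.even_pow' two_ne_zero).1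
    ((Int.even_mul.1 hb).resolve_left (Int.not_even_iff_odd.2 hk))).two_dvd
  have : Odd (27 * e ^ 6) := (by decide : Odd (27 : ℤ)).mul he.pow
  exact Int.not_even_iff_odd.2 this ⟨y ^ 3 - k * d ^ 2, by linarith⟩

lemma isCoprime_of_modEq_mul_sq {p u : ℤ} (hp : Prime p) (hXe : IsCoprime X e)
    (hX : X ≡ u * e ^ 2 [ZMOD p]) : IsCoprime e p := by
  refine (hp.irreducible.coprime_iff_not_dvd.2 fun hpe ↦ ?_).symm
  have hpX : p ∣ X := (dvd_iff_dvd_of_dvd_sub hX.dvd).1 ((dvd_pow hpe two_ne_zero).mul_left u)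
  exact not_isCoprime_of_prime_dvd hp hpX hpe hXe

lemma modEq_of_seventeen_dvd (hA : 17 ∣ X ^ 2 + 8 * X * e ^ 2 + 20 * e ^ 4)
    (hB : 17 ∣ X ^ 3 - 108 * e ^ 6) : X ≡ 5 * e ^ 2 [ZMOD 17] := by
  have key : ∀ X e : ZMod 17, X ^ 2 + 8 * X * e ^ 2 + 20 * e ^ 4 = 0 → X ^ 3 - 108 * e ^ 6 = 0 →
    X = 5 * e ^ 2 := by decide
  have hX := key X e (mod_cast (ZMod.intCast_zmod_eq_zero_iff_dvd _ 17).2 hA)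
    (mod_cast (ZMod.intCast_zmod_eq_zero_iff_dvd _ 17).2 hB)
  exact (ZMod.intCast_eq_intCast_iff _ _ 17).1 (mod_cast hX)

lemma modEq_of_five_dvd (hA : 5 ∣ X ^ 2 + 8 * X * e ^ 2 + 20 * e ^ 4)
    (hB : 5 ∣ X ^ 3 - 108 * e ^ 6) : X ≡ 2 * e ^ 2 [ZMOD 5] := by
  have key : ∀ X e : ZMod 5, X ^ 2 + 8 * X * e ^ 2 + 20 * e ^ 4 = 0 → X ^ 3 - 108 * e ^ 6 = 0 →
    X = 2 * e ^ 2 := by decide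
  have hX := key X e (mod_cast (ZMod.intCast_zmod_eq_zero_iff_dvd _ 5).2 hA)
    (mod_cast (ZMod.intCast_zmod_eq_zero_iff_dvd _ 5).2 hB)
  exact (ZMod.intCast_eq_intCast_iff _ _ 5).1 (mod_cast hX)

lemma prime_seventeen : Prime ((17 : ℕ) : ℤ) := Nat.prime_iff_prime_int.1 (by norm_num)

open NumberTheorySymbols in
lemma not_both_eightyfive_mul_sq (hX : 0 < X) (hXe : IsCoprime X e)
    (hA : X ^ 2 + 8 * X * e ^ 2 + 20 * e ^ 4 = 85 * a ^ 2)
    (hB : X ^ 3 - 108 * e ^ 6 = 85 * b ^ 2) : False := by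
  have h17 := modEq_of_seventeen_dvd (X := X) (e := e) ⟨5 * a ^ 2, by linarith⟩
    ⟨5 * b ^ 2, by linarith⟩
  have he17 : IsCoprime e (17 : ℕ) := isCoprime_of_modEq_mul_sq prime_seventeen hXe h17
  have h5X : IsCoprime 5 X := by
    have h5 : Prime (5 : ℤ) := Int.prime_ofNat_iff.2 Nat.prime_five
    refine h5.irreducible.coprime_iff_not_dvd.2 fun hdvd ↦ ?_
    have h5e : 5 ∣ 108 * e ^ 6 := by
      rw [show 108 * e ^ 6 = X * X ^ 2 - 5 * (17 * b ^ 2) by linarith]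
      exact dvd_sub (hdvd.mul_right _) (dvd_mul_right _ _)
    exact not_isCoprime_of_prime_dvd h5 hdvd
      (h5.dvd_of_dvd_pow ((h5.dvd_or_dvd h5e).resolve_left (by norm_num))) hXe
  lift X to ℕ using hX.le
  obtain ⟨k, m, hm, rfl⟩ := Nat.exists_eq_two_pow_mul_odd (n := X) (by rintro rfl; simp at hX)
  push_cast at *
  have hem : IsCoprime (2 * e ^ 2) (m : ℤ) :=
    (Nat.isCoprime_iff_coprime.2 hm.coprime_two_left : IsCoprime (2 : ℤ) m).mul_left
      hXe.of_mul_left_right.symm.pow_left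
  have hdvd : (m : ℤ) ∣ (2 * e ^ 2) ^ 2 - 17 * a ^ 2 := by
    refine h5X.of_mul_right_right.symm.dvd_of_dvd_mul_left ⟨-(2 ^ k * (2 ^ k * m + 8 * e ^ 2)), ?_⟩
    linear_combination hA
  have hJm : J(m | 17) = 1 := by
    rw [← jacobiSym.quadratic_reciprocity_one_mod_four (by norm_num) hm]
    exact jacobiSym_eq_one_of_dvd_sq_sub_mul_sq hem hdvd
  have hJX : J(2 ^ k * m | 17) = J(5 | 17) := jacobiSym_eq_of_modEq_mul_sq h17 he17
  rw [jacobiSym.mul_left, jacobiSym.pow_left, hJm] at hJX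
  norm_num at hJX

open NumberTheorySymbols in
lemma jacobiSym_neg_seventeen {N : ℕ} (hN : (N : ℤ) = X + 6 * e ^ 2) (hNodd : Odd N)
    (hXe : IsCoprime X e) (hB : X ^ 3 - 108 * e ^ 6 = 17 * b ^ 2) : J(-17 | N) = 1 := by
  have heN : IsCoprime e N := by
    rw [hN, sq, ← mul_assoc]
    exact hXe.symm.add_mul_right_right _
  have hdvd : (N : ℤ) ∣ (18 * e ^ 3) ^ 2 - -17 * b ^ 2 :=
    ⟨X ^ 2 - 6 * X * e ^ 2 + 36 * e ^ 4, by rw [hN]; linear_combination -hB⟩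
  obtain ⟨k, m, hm3, rfl⟩ := Nat.exists_eq_pow_mul_and_not_dvd hNodd.pos.ne' 3 (by norm_num)
  push_cast at heN hdvd
  have hm6 : IsCoprime (18 : ℤ) m := by
    rw [show (18 : ℤ) = 2 * 3 ^ 2 by norm_num]
    exact (Nat.isCoprime_iff_coprime.2 (Nat.odd_mul.1 hNodd).2.coprime_two_left).mul_left
      (Nat.isCoprime_iff_coprime.2 ((Nat.prime_three.coprime_iff_not_dvd).2 hm3)).pow_left
  have hm : J(-17 | m) = 1 := jacobiSym_eq_one_of_dvd_sq_sub_mul_sq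
    (hm6.mul_left heN.of_mul_right_right.pow_left) ((dvd_mul_left _ _).trans hdvd)
  rw [jacobiSym.mul_right' _ (by positivity) (right_ne_zero_of_mul hNodd.pos.ne'),
    jacobiSym.pow_right, hm]
  norm_num

open NumberTheorySymbols in
lemma not_both_seventeen_mul_sq (hX : 0 < X) (hXe : IsCoprime X e)
    (hA : X ^ 2 + 8 * X * e ^ 2 + 20 * e ^ 4 = 17 * a ^ 2)
    (hB : X ^ 3 - 108 * e ^ 6 = 17 * b ^ 2) : False := by
  have h17 := modEq_of_seventeen_dvd ⟨a ^ 2, hA⟩ ⟨b ^ 2, hB⟩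
  have he17 : IsCoprime e (17 : ℕ) := isCoprime_of_modEq_mul_sq prime_seventeen hXe h17
  have hXodd : Odd X := by
    by_contra hX2
    rw [Int.not_odd_iff_even] at hX2
    obtain ⟨y, rfl, hy⟩ := exists_two_mul_cube_mod_eight hX2
      (odd_of_isCoprime_of_even hXe hX2) (by decide) hB
    obtain ⟨z, rfl⟩ : 2 ∣ y := ((Int.even_pow' three_ne_zero).1 (Int.even_iff.2 (by lia))).two_dvd
    rw [mul_pow] at hy
    lia
  obtain ⟨hX8, he8⟩ := mod_eight_of_odd hXodd hA hB
  obtain ⟨N, hN⟩ : ∃ N : ℕ, (N : ℤ) = X + 6 * e ^ 2 :=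
    ⟨(X + 6 * e ^ 2).toNat, Int.toNat_of_nonneg (by positivity)⟩
  have hN8 : N % 8 = 1 := by
    obtain ⟨g, rfl⟩ : 2 ∣ e := by lia
    have : (N : ℤ) = X + 8 * (3 * g ^ 2) := by rw [hN]; ring
    lia
  have hNodd : Odd N := Nat.odd_iff.2 (by lia)
  have hJ17 : J(N | 17) = J(11 | 17) := by
    refine jacobiSym_eq_of_modEq_mul_sq ?_ he17
    rw [hN, show 11 * e ^ 2 = 5 * e ^ 2 + 6 * e ^ 2 by ring]
    exact h17.add_right _
  have hJ := jacobiSym_neg_seventeen hN hNodd hXe hB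
  rw [show (-17 : ℤ) = -1 * (17 : ℕ) by norm_num, jacobiSym.mul_left, jacobiSym.at_neg_one hNodd,
    jacobiSym.quadratic_reciprocity_one_mod_four (by norm_num) hNodd, hJ17,
    ZMod.χ₄_nat_one_mod_four (by lia)] at hJ
  norm_num at hJ

lemma modEq_three_mul_sq_of_sq_eq {m : ℤ} (he : IsCoprime e (5 : ℕ))
    (ha : a ^ 2 = 8 * e ^ 4 + 12 * m * e ^ 2 + 5 * m ^ 2)
    (hb : b ^ 2 = -20 * e ^ 6 + 12 * e ^ 4 * m + 30 * e ^ 2 * m ^ 2 + 25 * m ^ 3) :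
    m ≡ 3 * e ^ 2 [ZMOD 5] := by
  have key : ∀ e m a b : ZMod 5, e ≠ 0 → a ^ 2 = 3 * e ^ 4 + 2 * m * e ^ 2 →
      b ^ 2 = 2 * e ^ 4 * m → m = 3 * e ^ 2 := by decide +kernel
  have h5 : (5 : ZMod 5) = 0 := rfl
  have he0 : (e : ZMod 5) ≠ 0 := fun h0 ↦
    not_isCoprime_of_prime_dvd (Int.prime_ofNat_iff.2 Nat.prime_five)
      ((ZMod.intCast_zmod_eq_zero_iff_dvd _ 5).1 h0) dvd_rfl he
  have ha5 := congrArg (Int.cast : ℤ → ZMod 5) ha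
  have hb5 := congrArg (Int.cast : ℤ → ZMod 5) hb
  push_cast at ha5 hb5
  have hm := key e m a b he0 (by linear_combination ha5 + (e ^ 4 + 2 * m * e ^ 2 + m ^ 2) * h5)
    (by linear_combination hb5 + (-4 * e ^ 6 + 2 * e ^ 4 * m + 6 * e ^ 2 * m ^ 2 + 5 * m ^ 3) * h5)
  exact (ZMod.intCast_eq_intCast_iff _ _ 5).1 (mod_cast hm)

open NumberTheorySymbols in
lemma not_sq_eq_of_mod_four_eq_three {N : ℕ} (hNe : IsCoprime e N) (hN4 : N % 4 = 3)
    (he : IsCoprime e (5 : ℕ)) (h5 : 2 * (N : ℤ) ≡ 3 * e ^ 2 [ZMOD 5])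
    (hb : b ^ 2 = -20 * e ^ 6 + 12 * e ^ 4 * (2 * N) + 30 * e ^ 2 * (2 * N) ^ 2
      + 25 * (2 * N) ^ 3) : False := by
  have hNodd : Odd N := Nat.odd_iff.2 (by lia)
  have hJ5 : J(N | 5) = J(-1 | 5) := jacobiSym_eq_of_modEq_mul_sq (by
    rw [Int.modEq_iff_dvd] at h5 ⊢
    push_cast
    lia) he
  have hN10 : IsCoprime (-5 * 2) (N : ℤ) := by
    refine IsCoprime.mul_left (IsCoprime.neg_left ?_)
      (Nat.isCoprime_iff_coprime.2 hNodd.coprime_two_left)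
    have hp : Prime (5 : ℤ) := Int.prime_ofNat_iff.2 Nat.prime_five
    refine hp.irreducible.coprime_iff_not_dvd.2 fun hN ↦ ?_
    have h3 : 5 ∣ 3 * e ^ 2 := (dvd_iff_dvd_of_dvd_sub h5.dvd).2 (hN.mul_left 2)
    exact not_isCoprime_of_prime_dvd hp
      (hp.dvd_of_dvd_pow ((hp.dvd_or_dvd h3).resolve_left (by norm_num))) dvd_rfl he
  have hJ : J(-5 | N) = 1 := jacobiSym_eq_one_of_dvd_sq_sub_mul_sq' (x := b) (y := 2 * e ^ 3)
    (by rw [← mul_assoc]; exact hN10.mul_left hNe.pow_left)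
    ⟨24 * e ^ 4 + 120 * e ^ 2 * N + 200 * N ^ 2, by linear_combination hb⟩
  rw [show (-5 : ℤ) = -1 * (5 : ℕ) by norm_num, jacobiSym.mul_left, jacobiSym.at_neg_one hNodd,
    jacobiSym.quadratic_reciprocity_one_mod_four (by norm_num) hNodd, hJ5,
    ZMod.χ₄_nat_three_mod_four hN4] at hJ
  norm_num at hJ

open NumberTheorySymbols in
lemma not_sq_eq_of_mod_eight_eq_three {m : ℕ} (hme : IsCoprime e m) (hm8 : m % 8 = 3)
    (ha : a ^ 2 = 8 * e ^ 4 + 12 * m * e ^ 2 + 5 * m ^ 2) : False := by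
  have hmodd : Odd m := Nat.odd_iff.2 (by lia)
  have hm2 : IsCoprime (2 : ℤ) m := Nat.isCoprime_iff_coprime.2 hmodd.coprime_two_left
  have hJ : J(2 | m) = 1 := jacobiSym_eq_one_of_dvd_sq_sub_mul_sq' (x := a) (y := 2 * e ^ 2)
    (hm2.mul_left (hm2.mul_left hme.pow_left))
    ⟨12 * e ^ 2 + 5 * m, by linear_combination ha⟩
  rw [jacobiSym.at_two hmodd, ZMod.χ₈_nat_mod_eight, hm8] at hJ
  exact absurd hJ (by decide)

lemma eight_dvd_of_even (hX : Even X) (he : Odd e)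
    (hA : X ^ 2 + 8 * X * e ^ 2 + 20 * e ^ 4 = 5 * a ^ 2)
    (hB : X ^ 3 - 108 * e ^ 6 = 5 * b ^ 2) : 8 ∣ X := by
  obtain ⟨y, rfl, hy⟩ := exists_two_mul_cube_mod_eight hX he (by decide) hB
  obtain ⟨z, rfl⟩ : 2 ∣ y := ((Int.even_pow' three_ne_zero).1 (Int.even_iff.2 (by lia))).two_dvd
  have ha : Even (5 * a ^ 2) := ⟨8 * z ^ 2 + 16 * z * e ^ 2 + 10 * e ^ 4, by linarith⟩
  obtain ⟨d, rfl⟩ : 2 ∣ a := ((Int.even_pow' two_ne_zero).1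
    ((Int.even_mul.1 ha).resolve_left (by decide))).two_dvd
  have hd : 5 * d ^ 2 = 4 * (z + e ^ 2) ^ 2 + e ^ 4 := by linarith
  have hd2 : Odd d := by
    have : Odd (5 * d ^ 2) := by
      rw [hd]
      exact ((by decide : Even (4 : ℤ)).mul_right _).add_odd he.pow
    exact (Int.odd_pow' two_ne_zero).1 (Int.odd_mul.1 this).2
  have hze : Odd (z + e ^ 2) := by
    obtain ⟨i, hi⟩ := Int.eight_dvd_sq_sub_one_of_odd hd2
    obtain ⟨j, hj⟩ := Int.eight_dvd_sq_sub_one_of_odd (he.pow (n := 2))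
    exact (Int.odd_pow' two_ne_zero).1 (Int.odd_iff.2 (by lia))
  obtain ⟨w, rfl⟩ := (((Int.odd_add'.1 hze).1 he.pow).two_dvd)
  exact ⟨w, by ring⟩

lemma not_both_five_mul_sq (hX : 2 * e ^ 2 < X) (hXe : IsCoprime X e)
    (hA : X ^ 2 + 8 * X * e ^ 2 + 20 * e ^ 4 = 5 * a ^ 2)
    (hB : X ^ 3 - 108 * e ^ 6 = 5 * b ^ 2) : False := by
  have h5 := modEq_of_five_dvd (X := X) (e := e) ⟨a ^ 2, hA⟩ ⟨b ^ 2, hB⟩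
  have he5 : IsCoprime e (5 : ℕ) :=
    isCoprime_of_modEq_mul_sq (Int.prime_ofNat_iff.2 Nat.prime_five) hXe h5
  obtain ⟨m, hm⟩ := h5.symm.dvd
  obtain rfl : X = 2 * e ^ 2 + 5 * m := by linarith
  have hm0 : 0 < m := by linarith
  lift m to ℕ using hm0.le
  have ha : a ^ 2 = 8 * e ^ 4 + 12 * m * e ^ 2 + 5 * m ^ 2 := by linarith
  have hb : b ^ 2 = -20 * e ^ 6 + 12 * e ^ 4 * m + 30 * e ^ 2 * m ^ 2 + 25 * m ^ 3 := by linarith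
  have hem : IsCoprime e m := by
    rw [add_comm, sq, ← mul_assoc] at hXe
    exact hXe.of_add_mul_right_left.of_mul_left_right.symm
  rcases Int.even_or_odd (2 * e ^ 2 + 5 * m) with hX2 | hX2
  · have he := odd_of_isCoprime_of_even hXe hX2
    have hX8 : (2 * e ^ 2 + 5 * m) % 8 = 0 := by
      exact Int.emod_eq_zero_of_dvd (eight_dvd_of_even hX2 he hA hB)
    obtain ⟨i, hi⟩ := Int.eight_dvd_sq_sub_one_of_odd he
    obtain ⟨N, rfl⟩ : 2 ∣ m := by lia
    push_cast at *
    exact not_sq_eq_of_mod_four_eq_three hem.of_mul_right_right (by lia) he5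
      (modEq_three_mul_sq_of_sq_eq he5 ha hb) hb
  · obtain ⟨hX8, he8⟩ := mod_eight_of_odd hX2 hA hB
    obtain ⟨i, hi⟩ := Int.eight_dvd_sq_sub_one_of_odd (Int.odd_iff.2 (by lia) : Odd e)
    exact not_sq_eq_of_mod_eight_eq_three hem (by lia) ha

lemma two_mul_sq_lt (he : e ≠ 0) (h : 0 < X ^ 3 - 108 * e ^ 6) : 2 * e ^ 2 < X := by
  have h6 : 0 < e ^ 6 := (by decide : Even 6).pow_pos he
  refine (Odd.strictMono_pow (by decide : Odd 3)).lt_iff_lt.1 (?_ : (2 * e ^ 2) ^ 3 < X ^ 3)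
  linarith

lemma ne_sq_of_sub_eq_sq (he : e ≠ 0) : X ^ 3 - 108 * e ^ 6 ≠ b ^ 2 := by
  intro h
  have he0 : (e : ℚ) ≠ 0 := mod_cast he
  have hq : (X : ℚ) ^ 3 - 108 * e ^ 6 = b ^ 2 := mod_cast h
  refine sq_ne_cube_sub (X / e ^ 2) (b / e ^ 3) ?_
  field_simp
  linear_combination -hq

lemma dvd_of_eq_mul_sq {k : ℤ} (hXe : IsCoprime X e)
    (hA : X ^ 2 + 8 * X * e ^ 2 + 20 * e ^ 4 = k * a ^ 2)
    (hB : X ^ 3 - 108 * e ^ 6 = k * b ^ 2) : k ∣ 5780 := by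
  have hke : IsCoprime k e := by
    have hBe : IsCoprime (k * b ^ 2) e := by
      rw [← hB, show X ^ 3 - 108 * e ^ 6 = X ^ 3 + e * (-108 * e ^ 5) by ring]
      exact hXe.pow_left.add_mul_left_left _
    exact hBe.of_mul_left_left
  refine (hke.pow_right (n := 8)).dvd_of_dvd_mul_right ⟨a ^ 2 * (484 * e ^ 4
    + (-11 * X - 75 * e ^ 2) * (8 * e ^ 2 - X)) + b ^ 2 * (-11 * X - 75 * e ^ 2), ?_⟩
  linear_combination (484 * e ^ 4 + (-11 * X - 75 * e ^ 2) * (8 * e ^ 2 - X)) * hA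
    + (-11 * X - 75 * e ^ 2) * hB

lemma homogenized_mul_ne_sq {f : ℤ} (he : e ≠ 0) (hXe : IsCoprime X e) :
    (X ^ 2 + 8 * X * e ^ 2 + 20 * e ^ 4) * (X ^ 3 - 108 * e ^ 6) ≠ f ^ 2 := by
  intro h
  have hA0 : 0 < X ^ 2 + 8 * X * e ^ 2 + 20 * e ^ 4 := by
    rw [show X ^ 2 + 8 * X * e ^ 2 + 20 * e ^ 4 = (X + 4 * e ^ 2) ^ 2 + 4 * e ^ 4 by ring]
    positivity
  have hB0 : 0 < X ^ 3 - 108 * e ^ 6 :=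
    lt_of_le_of_ne (nonneg_of_mul_nonneg_right (h ▸ sq_nonneg f) hA0)
      fun h0 ↦ ne_sq_of_sub_eq_sq (b := 0) he (by rw [← h0]; norm_num)
  have hX := two_mul_sq_lt he hB0
  have hX0 : 0 < X := lt_of_le_of_lt (by positivity) hX
  obtain ⟨k, a, b, hk, hA, hB⟩ := exists_squarefree_mul_sq_of_mul_eq_sq hA0 h
  have hk170 : k ∈ Nat.divisors 170 := by
    refine Nat.mem_divisors.2 ⟨(hk.dvd_pow_iff_dvd two_ne_zero).1 (?_ : k ∣ 170 ^ 2), by decide⟩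
    exact (Int.natCast_dvd_natCast.1 (dvd_of_eq_mul_sq hXe hA hB)).trans
      (by norm_num : 5780 ∣ 170 ^ 2)
  rw [show Nat.divisors 170 = {1, 2, 5, 10, 17, 34, 85, 170} by decide +kernel] at hk170
  simp only [Finset.mem_insert, Finset.mem_singleton] at hk170
  rcases hk170 with rfl | rfl | rfl | rfl | rfl | rfl | rfl | rfl
  · exact ne_sq_of_sub_eq_sq he (hB.trans (one_mul _))
  · exact sub_ne_two_mul_of_isCoprime (k := 1) hXe (by decide) hB
  · exact not_both_five_mul_sq hX hXe hA hB
  · exact sub_ne_two_mul_of_isCoprime (k := 5) hXe (by decide) hB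
  · exact not_both_seventeen_mul_sq hX0 hXe hA hB
  · exact sub_ne_two_mul_of_isCoprime (k := 17) hXe (by decide) hB
  · exact not_both_eightyfive_mul_sq hX0 hXe hA hB
  · exact sub_ne_two_mul_of_isCoprime (k := 85) hXe (by decide) hB

end GenusTwoCurve

lemma exists_den_mul_eq_sq {x y : ℚ} (h : ((x + 4) ^ 2 + 4) * (x ^ 3 - 108) = y ^ 2) :
    ∃ z : ℤ, x.den * ((x.num ^ 2 + 8 * x.num * x.den + 20 * x.den ^ 2)
      * (x.num ^ 3 - 108 * x.den ^ 3)) = z ^ 2 := by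
  have hsq : IsSquare (((x.den * ((x.num ^ 2 + 8 * x.num * x.den + 20 * x.den ^ 2)
      * (x.num ^ 3 - 108 * x.den ^ 3)) : ℤ)) : ℚ) := by
    have hx : x * x.den = x.num := Rat.mul_den_eq_num x
    refine ⟨x.den ^ 3 * y, ?_⟩
    push_cast
    rw [← hx]
    linear_combination (x.den : ℚ) ^ 6 * h
  obtain ⟨z, hz⟩ := Rat.isSquare_intCast_iff.1 hsq
  exact ⟨z, by rw [hz, sq]⟩

lemma quadratic_mul_cubic_ne_sq (x y : ℚ) : ((x + 4) ^ 2 + 4) * (x ^ 3 - 108) ≠ y ^ 2 := by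
  intro h
  obtain ⟨z, hz⟩ := exists_den_mul_eq_sq h
  have hXn := Rat.isCoprime_num_den x
  have hn0 : (x.den : ℤ) ≠ 0 := mod_cast x.den_ne_zero
  have hn : 0 ≤ (x.den : ℤ) := by positivity
  generalize x.num = X, (x.den : ℤ) = n at *
  have hn_cop : IsCoprime n ((X ^ 2 + 8 * X * n + 20 * n ^ 2) * (X ^ 3 - 108 * n ^ 3)) := by
    rw [show (X ^ 2 + 8 * X * n + 20 * n ^ 2) * (X ^ 3 - 108 * n ^ 3) = X ^ 5 + n *
      ((8 * X + 20 * n) * X ^ 3 - 108 * n ^ 2 * (X ^ 2 + 8 * X * n + 20 * n ^ 2)) by ring]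
    exact hXn.symm.pow_right.add_mul_left_right _
  obtain ⟨e, rfl⟩ := exists_eq_pow_of_mul_eq_pow_of_nonneg even_two hn_cop hn hz
  have hP : 0 ≤ (X ^ 2 + 8 * X * e ^ 2 + 20 * (e ^ 2) ^ 2) * (X ^ 3 - 108 * (e ^ 2) ^ 3) :=
    nonneg_of_mul_nonneg_right (hz ▸ sq_nonneg z) (lt_of_le_of_ne hn hn0.symm)
  obtain ⟨f, hf⟩ := exists_eq_pow_of_mul_eq_pow_of_nonneg even_two hn_cop.symm hP
    ((mul_comm _ _).trans hz)
  have he : e ≠ 0 := by rintro rfl; exact hn0 (by norm_num)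
  exact homogenized_mul_ne_sq he ((IsCoprime.pow_right_iff two_pos).1 hXn) (by rw [← hf]; ring)

/-! ### Wreath products -/

section WreathProduct

open Equiv

variable {ι A B : Type*} [AddCommGroup A] [AddCommGroup B]

/-- The element `(i, j) ↦ (σ i, j + a i)` of the wreath product `A ≀ Perm ι`, in its imprimitive
action on `ι × A`. -/
def wreathPerm (σ : Perm ι) (a : ι → A) : Perm (ι × A) :=
  σ.prodShear fun i ↦ Equiv.addRight (a i)

@[simp]
lemma wreathPerm_apply (σ : Perm ι) (a : ι → A) (p : ι × A) :
    wreathPerm σ a p = (σ p.1, p.2 + a p.1) := rfl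

@[simp]
lemma wreathPerm_one_zero : wreathPerm 1 0 = (1 : Perm (ι × A)) := by
  ext p <;> simp

lemma wreathPerm_mul (σ τ : Perm ι) (a b : ι → A) :
    wreathPerm σ a * wreathPerm τ b = wreathPerm (σ * τ) (b + a ∘ τ) := by
  ext p <;> simp [add_assoc]

lemma wreathPerm_inv (σ : Perm ι) (a : ι → A) :
    (wreathPerm σ a)⁻¹ = wreathPerm σ⁻¹ (-(a ∘ ⇑σ⁻¹)) := by
  rw [inv_eq_iff_mul_eq_one, wreathPerm_mul]
  convert wreathPerm_one_zero using 2
  · simp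
  · ext i
    simp

lemma wreathPerm_conj (σ : Perm ι) (s η : ι → A) :
    MulAut.conj (wreathPerm 1 η) (wreathPerm σ s) = wreathPerm σ (s - η + η ∘ σ) := by
  ext p <;> simp [wreathPerm_inv]
  abel

lemma wreathPerm_ext {σ τ : Perm ι} {a b : ι → A} (h : wreathPerm σ a = wreathPerm τ b) :
    σ = τ ∧ a = b := by
  have hp (i : ι) := Prod.ext_iff.1 (DFunLike.congr_fun h (i, (0 : A)))
  exact ⟨Equiv.ext fun i ↦ (hp i).1, funext fun i ↦ by simpa using (hp i).2⟩

/-- The permutations of the blocks induced by the elements of `H` in the wreath product. -/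
def blockPerms (H : Subgroup (Perm (ι × A))) : Subgroup (Perm ι) where
  carrier := {σ | ∃ a : ι → A, wreathPerm σ a ∈ H}
  mul_mem' := by
    rintro σ τ ⟨a, ha⟩ ⟨b, hb⟩
    exact ⟨_, wreathPerm_mul σ τ a b ▸ H.mul_mem ha hb⟩
  one_mem' := ⟨0, by simp⟩
  inv_mem' := by
    rintro σ ⟨a, ha⟩
    exact ⟨_, wreathPerm_inv σ a ▸ H.inv_mem ha⟩

/-- The elements of `H` in the base group `ι → A` of the wreath product. -/
def translations (H : Subgroup (Perm (ι × A))) : AddSubgroup (ι → A) where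
  carrier := {a | wreathPerm 1 a ∈ H}
  add_mem' := by
    intro a b ha hb
    have := H.mul_mem hb ha
    rwa [wreathPerm_mul, one_mul, Perm.coe_one, Function.comp_id] at this
  zero_mem' := by simp
  neg_mem' := by
    intro a ha
    have := H.inv_mem ha
    rwa [wreathPerm_inv, inv_one, Perm.coe_one, Function.comp_id] at this

lemma mem_translations {H : Subgroup (Perm (ι × A))} {a : ι → A} :
    a ∈ translations H ↔ wreathPerm 1 a ∈ H := Iff.rfl

lemma wreathPerm_mem {H : Subgroup (Perm (ι × A))} (hblock : blockPerms H = ⊤)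
    (htrans : translations H = ⊤) (σ : Perm ι) (a : ι → A) : wreathPerm σ a ∈ H := by
  obtain ⟨b, hb⟩ : σ ∈ blockPerms H := hblock ▸ Subgroup.mem_top σ
  have hab : a - b ∈ translations H := htrans ▸ AddSubgroup.mem_top _
  have := H.mul_mem hb hab
  rwa [wreathPerm_mul, mul_one, Perm.coe_one, Function.comp_id, sub_add_cancel] at this

/-- The image of `H ∩ (A ≀ Perm ι)` in `B ≀ Perm ι` under a homomorphism `f : A →+ B`. -/
def wreathMap (f : A →+ B) (H : Subgroup (Perm (ι × A))) : Subgroup (Perm (ι × B)) where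
  carrier := {g | ∃ σ a, wreathPerm σ a ∈ H ∧ wreathPerm σ (f ∘ a) = g}
  mul_mem' := by
    rintro _ _ ⟨σ, a, ha, rfl⟩ ⟨τ, b, hb, rfl⟩
    refine ⟨_, _, wreathPerm_mul σ τ a b ▸ H.mul_mem ha hb, ?_⟩
    rw [wreathPerm_mul]
    congr 1
    ext i
    simp
  one_mem' := ⟨1, 0, by simp, by ext p <;> simp⟩
  inv_mem' := by
    rintro _ ⟨σ, a, ha, rfl⟩
    refine ⟨_, _, wreathPerm_inv σ a ▸ H.inv_mem ha, ?_⟩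
    rw [wreathPerm_inv]
    congr 1
    ext i
    simp

lemma wreathPerm_comp_mem_wreathMap {f : A →+ B} {H : Subgroup (Perm (ι × A))} {σ : Perm ι}
    {a : ι → A} (ha : wreathPerm σ a ∈ H) : wreathPerm σ (f ∘ a) ∈ wreathMap f H :=
  ⟨σ, a, ha, rfl⟩

lemma mem_wreathMap {f : A →+ B} {H : Subgroup (Perm (ι × A))} {σ : Perm ι} {b : ι → B} :
    wreathPerm σ b ∈ wreathMap f H ↔ ∃ a, wreathPerm σ a ∈ H ∧ f ∘ a = b := by
  refine ⟨?_, fun ⟨a, ha, hab⟩ ↦ hab ▸ wreathPerm_comp_mem_wreathMap ha⟩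
  rintro ⟨τ, a, ha, h⟩
  obtain ⟨rfl, rfl⟩ := wreathPerm_ext h
  exact ⟨a, ha, rfl⟩

lemma wreathPerm_one_pow (a : ι → A) (k : ℕ) : wreathPerm 1 a ^ k = wreathPerm 1 (k • a) := by
  induction k with
  | zero => simp
  | succ k ih =>
    rw [pow_succ', ih, wreathPerm_mul, one_mul, Perm.coe_one, Function.comp_id, succ_nsmul]

lemma apply_eq_of_commute_wreathPerm_one_one {n : ℕ} [NeZero n] {g : Perm (ι × ZMod n)}
    (hg : Commute g (wreathPerm 1 1)) (i : ι) (j : ZMod n) :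
    g (i, j) = ((g (i, 0)).1, j + (g (i, 0)).2) := by
  obtain ⟨k, rfl⟩ := ZMod.natCast_zmod_surjective j
  have h := DFunLike.congr_fun (hg.pow_right k).eq (i, 0)
  simpa [wreathPerm_one_pow, add_comm] using h

lemma mem_centralizer_wreathPerm_one_one {n : ℕ} [NeZero n] {g : Perm (ι × ZMod n)} :
    g ∈ Subgroup.centralizer {wreathPerm (1 : Perm ι) (1 : ι → ZMod n)} ↔
      ∃ σ a, wreathPerm σ a = g := by
  rw [Subgroup.mem_centralizer_singleton_iff]
  constructor
  · intro (hg : Commute g _)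
    have hfst {h : Perm (ι × ZMod n)} (hh : Commute h (wreathPerm 1 1)) (p : ι × ZMod n) :
        (h (p.1, 0)).1 = (h p).1 :=
      (congrArg Prod.fst (apply_eq_of_commute_wreathPerm_one_one hh p.1 p.2)).symm
    refine ⟨⟨fun i ↦ (g (i, 0)).1, fun i ↦ (g⁻¹ (i, 0)).1, fun i ↦ ?_, fun i ↦ ?_⟩,
      fun i ↦ (g (i, 0)).2, ?_⟩
    · simpa using hfst hg.inv_left (g (i, 0))
    · simp [hfst hg]
    · ext p : 1
      exact (apply_eq_of_commute_wreathPerm_one_one hg p.1 p.2).symm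
  · rintro ⟨σ, a, rfl⟩
    ext p <;> simp [add_right_comm]

end WreathProduct

section WreathCriterion

open Equiv

lemma finRotate_mem {K : Subgroup (Perm (Fin 3))} (hK : ∀ i, ∃ σ ∈ K, σ i ≠ i) :
    finRotate 3 ∈ K := by
  choose f hf hfi using hK
  have key : ∀ x y z : Perm (Fin 3), x 0 ≠ 0 → y 1 ≠ 1 → z 2 ≠ 2 → ∃ u ∈ [x, y, z],
    ∃ v ∈ [x, y, z], u * v = finRotate 3 ∨ u * v = (finRotate 3)⁻¹ := by decide +kernel
  have hmem : ∀ u ∈ [f 0, f 1, f 2], u ∈ K := by simp [hf]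
  obtain ⟨u, hu, v, hv, h | h⟩ := key (f 0) (f 1) (f 2) (hfi 0) (hfi 1) (hfi 2)
  · exact h ▸ K.mul_mem (hmem u hu) (hmem v hv)
  · exact K.inv_mem_iff.1 (h ▸ K.mul_mem (hmem u hu) (hmem v hv))

lemma perm_three_eq_top {K : Subgroup (Perm (Fin 3))} (hK : ∀ i, ∃ σ ∈ K, σ i ≠ i)
    (hodd : ∃ σ ∈ K, Perm.sign σ ≠ 1) : K = ⊤ := by
  obtain ⟨τ, hτ, hsign⟩ := hodd
  have key : ∀ τ : Perm (Fin 3), Perm.sign τ ≠ 1 → ∃ x y, x ≠ y ∧ τ = swap x y := by decide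
  have htop := Perm.closure_prime_cycle_swap (by norm_num) (isCycle_finRotate (n := 1))
    support_finRotate (key τ hsign)
  rw [eq_top_iff, ← htop, Subgroup.closure_le]
  exact Set.insert_subset (finRotate_mem hK) (Set.singleton_subset_iff.2 hτ)

lemma eq_top_of_rotation_stable {T : AddSubgroup (Fin 3 → ZMod 2)}
    (hrot : ∀ v ∈ T, v ∘ finRotate 3 ∈ T) (heven : ∃ v ∈ T, v ≠ 0 ∧ ∑ i, v i = 0)
    (hodd : ∃ w ∈ T, ∑ i, w i = 1) : T = ⊤ := by
  obtain ⟨v, hv, hv0, hvsum⟩ := heven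
  obtain ⟨w, hw, hwsum⟩ := hodd
  have key : ∀ v : Fin 3 → ZMod 2, v ≠ 0 → ∑ i, v i = 0 → ∀ w : Fin 3 → ZMod 2, ∑ i, w i = 1 →
    ∀ x : Fin 3 → ZMod 2, ∃ a b c : Fin 2,
      x = a.val • v + b.val • (v ∘ finRotate 3) + c.val • w := by decide +kernel
  refine eq_top_iff.2 fun x _ ↦ ?_
  obtain ⟨a, b, c, rfl⟩ := key v hv0 hvsum w hwsum x
  exact T.add_mem (T.add_mem (T.nsmul_mem hv _) (T.nsmul_mem (hrot v hv) _)) (T.nsmul_mem hw _)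

variable {H : Subgroup (Perm (Fin 3 × ZMod 2))}

lemma comp_finRotate_mem_translations (hrot : wreathPerm (finRotate 3) 0 ∈ H)
    {v : Fin 3 → ZMod 2} (hv : v ∈ translations H) : v ∘ finRotate 3 ∈ translations H := by
  have := H.mul_mem (H.mul_mem (H.inv_mem hrot) hv) hrot
  rw [wreathPerm_inv, wreathPerm_mul, wreathPerm_mul] at this
  simpa [mem_translations] using this

lemma exists_even_mem_translations (hrot : wreathPerm (finRotate 3) 0 ∈ H)
    (hs : ∃ σ s, wreathPerm σ s ∈ H ∧ ∃ i j, s i ≠ s j) :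
    ∃ v ∈ translations H, v ≠ 0 ∧ ∑ i, v i = 0 := by
  obtain ⟨σ, s, hmem, hs⟩ := hs
  have key : ∀ (σ : Perm (Fin 3)) (s : Fin 3 → ZMod 2), (∃ i j, s i ≠ s j) →
    ∃ v, v ≠ 0 ∧ ∑ i, v i = 0 ∧ ∃ k : Fin 3, wreathPerm σ s * wreathPerm (finRotate 3) 0 *
      (wreathPerm σ s)⁻¹ * wreathPerm (finRotate 3) 0 ^ k.val = wreathPerm 1 v := by
    decide +kernel
  obtain ⟨v, hv0, hv, k, h⟩ := key σ s hs
  exact ⟨v, mem_translations.2 (h ▸ H.mul_mem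
    (H.mul_mem (H.mul_mem hmem hrot) (H.inv_mem hmem)) (H.pow_mem hrot k)), hv0, hv⟩

lemma exists_odd_mem_translations
    (hs : ∃ σ s, wreathPerm σ s ∈ H ∧ Perm.sign σ = 1 ∧ ∑ i, s i = 1) :
    ∃ w ∈ translations H, ∑ i, w i = 1 := by
  obtain ⟨σ, s, hmem, hσ, hs⟩ := hs
  have key : ∀ (σ : Perm (Fin 3)) (s : Fin 3 → ZMod 2), Perm.sign σ = 1 → ∑ i, s i = 1 →
    ∃ w, ∑ i, w i = 1 ∧ wreathPerm σ s ^ 3 = wreathPerm 1 w := by decide +kernel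
  obtain ⟨w, hw, h⟩ := key σ s hσ hs
  exact ⟨w, mem_translations.2 (h ▸ H.pow_mem hmem 3), hw⟩

lemma exists_even_perm_sum_eq_one (hodd : ∃ σ s, wreathPerm σ s ∈ H ∧ ∑ i, s i ≠ 0)
    (hmixed : ∃ σ s, wreathPerm σ s ∈ H ∧ ¬ (Perm.sign σ = 1 ↔ ∑ i, s i = 0)) :
    ∃ σ s, wreathPerm σ s ∈ H ∧ Perm.sign σ = 1 ∧ ∑ i, s i = 1 := by
  have ne_zero : ∀ x : ZMod 2, x ≠ 0 ↔ x = 1 := by decide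
  obtain ⟨σ, s, hσs, hs⟩ := hodd
  obtain ⟨τ, t, hτt, ht⟩ := hmixed
  by_cases hσ : Perm.sign σ = 1
  · exact ⟨σ, s, hσs, hσ, (ne_zero _).1 hs⟩
  by_cases hτ : Perm.sign τ = 1
  · exact ⟨τ, t, hτt, hτ, by simpa [hτ, ne_zero] using ht⟩
  have ht0 : ∑ i, t i = 0 := by simpa [hτ] using ht
  refine ⟨τ * σ, _, wreathPerm_mul τ σ t s ▸ H.mul_mem hτt hσs, ?_, ?_⟩
  · rw [map_mul, Int.units_ne_iff_eq_neg.1 hσ, Int.units_ne_iff_eq_neg.1 hτ]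
    rfl
  · simp [Finset.sum_add_distrib, Equiv.sum_comp σ t, ht0, (ne_zero _).1 hs]

lemma translations_eq_top_of_finRotate_mem (hrot : wreathPerm (finRotate 3) 0 ∈ H)
    (hodd : ∃ σ s, wreathPerm σ s ∈ H ∧ ∑ i, s i ≠ 0)
    (hmixed : ∃ σ s, wreathPerm σ s ∈ H ∧ ¬ (Perm.sign σ = 1 ↔ ∑ i, s i = 0))
    (hconst : ∃ σ s, wreathPerm σ s ∈ H ∧ ∃ i j, s i ≠ s j) : translations H = ⊤ :=
  eq_top_of_rotation_stable (fun _ ↦ comp_finRotate_mem_translations hrot)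
    (exists_even_mem_translations hrot hconst)
    (exists_odd_mem_translations (exists_even_perm_sum_eq_one hodd hmixed))

/-- The fourth power of a lift of the rotation is conjugate to the rotation itself. -/
lemma exists_conj_finRotate_mem (hrot : finRotate 3 ∈ blockPerms H) :
    ∃ η : Fin 3 → ZMod 2,
      wreathPerm (finRotate 3) 0 ∈ H.map (MulAut.conj (wreathPerm 1 η)).toMonoidHom := by
  obtain ⟨s, hs⟩ := hrot
  have key : ∀ s : Fin 3 → ZMod 2, MulAut.conj (wreathPerm 1 (s ∘ finRotate 3))
    (wreathPerm (finRotate 3) s ^ 4) = wreathPerm (finRotate 3) 0 := by decide +kernel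
  exact ⟨s ∘ finRotate 3, _, H.pow_mem hs 4, key s⟩

lemma conj_mem_map_conj {σ : Perm (Fin 3)} {s : Fin 3 → ZMod 2} (h : wreathPerm σ s ∈ H)
    (η : Fin 3 → ZMod 2) :
    wreathPerm σ (s - η + η ∘ σ) ∈ H.map (MulAut.conj (wreathPerm 1 η)).toMonoidHom :=
  ⟨_, h, wreathPerm_conj σ s η⟩

lemma translations_map_conj (η : Fin 3 → ZMod 2) :
    translations (H.map (MulAut.conj (wreathPerm 1 η)).toMonoidHom) = translations H := by
  ext v
  have hv : MulAut.conj (wreathPerm 1 η) (wreathPerm 1 v) = wreathPerm 1 v := by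
    rw [wreathPerm_conj, Perm.coe_one, Function.comp_id, sub_add_cancel]
  rw [mem_translations, mem_translations]
  nth_rw 1 [← hv]
  exact Subgroup.mem_map_iff_mem (MulAut.conj (wreathPerm 1 η)).injective

theorem translations_eq_top (hmove : ∀ i, ∃ σ ∈ blockPerms H, σ i ≠ i)
    (hodd : ∃ σ s, wreathPerm σ s ∈ H ∧ ∑ i, s i ≠ 0)
    (hmixed : ∃ σ s, wreathPerm σ s ∈ H ∧ ¬ (Perm.sign σ = 1 ↔ ∑ i, s i = 0))
    (hcocycle : ∀ η : Fin 3 → ZMod 2, ∃ σ s, wreathPerm σ s ∈ H ∧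
      ∃ i j, (s - η + η ∘ σ) i ≠ (s - η + η ∘ σ) j) : translations H = ⊤ := by
  obtain ⟨η, hη⟩ := exists_conj_finRotate_mem (finRotate_mem hmove)
  have hsum (σ : Perm (Fin 3)) (s : Fin 3 → ZMod 2) : ∑ i, (s - η + η ∘ σ) i = ∑ i, s i := by
    simp [Finset.sum_add_distrib, Equiv.sum_comp σ η]
  rw [← translations_map_conj η]
  refine translations_eq_top_of_finRotate_mem hη ?_ ?_ ?_
  · obtain ⟨σ, s, h, hs⟩ := hodd
    exact ⟨σ, _, conj_mem_map_conj h η, by rwa [hsum]⟩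
  · obtain ⟨σ, s, h, hs⟩ := hmixed
    exact ⟨σ, _, conj_mem_map_conj h η, by rwa [hsum]⟩
  · obtain ⟨σ, s, h, hs⟩ := hcocycle η
    exact ⟨σ, _, conj_mem_map_conj h η, hs⟩

end WreathCriterion

section Reduction

variable {ι A B : Type*} [AddCommGroup A] [AddCommGroup B]

lemma translations_eq_top_of_wreathMap {f : A →+ B}
    (hf : ∀ x, f x = 0 → ∃ y, ∀ b, f b = y → b + b = x) {H : Subgroup (Equiv.Perm (ι × A))}
    (h : translations (wreathMap f H) = ⊤) : translations H = ⊤ := by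
  have hlift (v : ι → B) : ∃ a ∈ translations H, f ∘ a = v :=
    mem_wreathMap.1 (mem_translations.1 (h ▸ AddSubgroup.mem_top v))
  refine eq_top_iff.2 fun v _ ↦ ?_
  obtain ⟨a, ha, hav⟩ := hlift (f ∘ v)
  have hker (i : ι) : f ((v - a) i) = 0 := by
    simpa [sub_eq_zero] using (congrFun hav i).symm
  choose y hy using fun i ↦ hf _ (hker i)
  obtain ⟨b, hb, rfl⟩ := hlift y
  obtain rfl : v = b + b + a := funext fun i ↦ eq_add_of_sub_eq (hy i _ rfl).symm
  exact add_mem (add_mem hb hb) ha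

/-- Reduction modulo `2` on `ℤ/4`. -/
def modTwo : ZMod 4 →+ ZMod 2 := (ZMod.castHom (by norm_num) (ZMod 2)).toAddMonoidHom

lemma exists_double_of_modTwo_eq_zero :
    ∀ x, modTwo x = 0 → ∃ y, ∀ b, modTwo b = y → b + b = x := by decide

end Reduction

/-! ### Four-cycles of `x ↦ x² + c` -/

section Phi4

variable {K L : Type*} [Field K] [Field L]

lemma Phi4_monic (c : K) : (Phi4 c).Monic := by
  unfold Phi4
  monicity!

lemma natDegree_Phi4 (c : K) : (Phi4 c).natDegree = 12 := by
  unfold Phi4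
  compute_degree!

lemma map_Phi4 (φ : K →+* L) (c : K) : (Phi4 c).map φ = Phi4 (φ c) := by
  simp only [Phi4, Polynomial.map_add, Polynomial.map_mul, Polynomial.map_pow, map_X, map_C,
    map_add, map_mul, map_pow, Polynomial.map_ofNat, Polynomial.map_one, map_ofNat, map_one]

lemma eval_Phi4_mul (c x : K) :
    (Phi4 c).eval x * ((x ^ 2 + c) ^ 2 + c - x) =
      (((x ^ 2 + c) ^ 2 + c) ^ 2 + c) ^ 2 + c - x := by
  simp only [Phi4, eval_add, eval_mul, eval_pow, eval_X, eval_C]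
  ring

end Phi4

section DepressedCubic

variable {K : Type*} [Field K] {t : Fin 3 → K} {a b : K}

lemma vandermonde_det_sq (h1 : ∑ i, t i = 0) (h2 : t 0 * t 1 + t 0 * t 2 + t 1 * t 2 = a)
    (h3 : t 0 * t 1 * t 2 = -b) :
    (Matrix.vandermonde t).det ^ 2 = -(4 * a ^ 3 + 27 * b ^ 2) := by
  rw [Fin.sum_univ_three] at h1
  have ht2 : t 2 = -t 0 - t 1 := by linear_combination h1
  obtain rfl : b = -(t 0 * t 1 * t 2) := by rw [h3, neg_neg]
  simp only [Matrix.det_fin_three, Matrix.vandermonde_apply, ← h2, ht2]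
  simp
  ring

lemma symmetric_eq_of_cubic_root (ht : Function.Injective t)
    (hroot : ∀ i, t i ^ 3 + a * t i + b = 0) :
    ∑ i, t i = 0 ∧ t 0 * t 1 + t 0 * t 2 + t 1 * t 2 = a ∧ t 0 * t 1 * t 2 = -b := by
  have hquot {i j : Fin 3} (hij : i ≠ j) : t i ^ 2 + t i * t j + t j ^ 2 + a = 0 := by
    refine (mul_eq_zero.1 ?_).resolve_left (sub_ne_zero.2 (ht.ne hij))
    linear_combination hroot i - hroot j
  have h01 := hquot (i := 0) (j := 1) (by decide)
  have h02 := hquot (i := 0) (j := 2) (by decide)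
  have hsum : t 0 + t 1 + t 2 = 0 := by
    refine (mul_eq_zero.1 ?_).resolve_left (sub_ne_zero.2 (ht.ne (by decide : (1 : Fin 3) ≠ 2)))
    linear_combination h01 - h02
  refine ⟨by rwa [Fin.sum_univ_three], ?_, ?_⟩
  · linear_combination (t 0 + t 1) * hsum - h01
  · linear_combination t 0 * t 1 * hsum - t 0 * h01 + hroot 0

lemma exists_injective_cubic_root [IsAlgClosed K] (hdisc : 4 * a ^ 3 + 27 * b ^ 2 ≠ 0) :
    ∃ t : Fin 3 → K, Function.Injective t ∧ ∀ i, t i ^ 3 + a * t i + b = 0 := by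
  let P : Cubic K := ⟨1, 0, a, b⟩
  have hP : P.a ≠ 0 := one_ne_zero
  obtain ⟨x, y, z, h⟩ :=
    (Cubic.splits_iff_roots_eq_three (φ := RingHom.id K) hP).1 (IsAlgClosed.splits _)
  have hdiscr : P.discr ≠ 0 := by
    refine fun h0 ↦ hdisc ?_
    simp only [P, Cubic.discr] at h0
    linear_combination -h0
  obtain ⟨hxy, hxz, hyz⟩ := (Cubic.discr_ne_zero_iff_roots_ne hP h).1 hdiscr
  have hroot : ∀ u ∈ (P.map (RingHom.id K)).roots, u ^ 3 + a * u + b = 0 := by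
    intro u hu
    simpa [P, Cubic.map, Cubic.toPoly, Cubic.roots] using isRoot_of_mem_roots hu
  refine ⟨![x, y, z], ?_, ?_⟩
  · simp [Function.Injective, Fin.forall_fin_succ, hxy, hxz, hyz, hxy.symm, hxz.symm, hyz.symm]
  · simp only [h] at hroot
    simpa [Fin.forall_fin_succ] using hroot

end DepressedCubic

section FourCycle

variable {K : Type*} [Field K] {c : K} {f g : ZMod 4 → K}

lemma half_trace_mul_half_trace (hf : ∀ j, f (j + 1) = f j ^ 2 + c) (h02 : f 0 ≠ f 2) :
    (f 0 + f 2) * (f 1 + f 3) = -1 := by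
  have h0 : f 1 = f 0 ^ 2 + c := hf 0
  have h1 : f 2 = f 1 ^ 2 + c := hf 1
  have h2 : f 3 = f 2 ^ 2 + c := hf 2
  have h3 : f 0 = f 3 ^ 2 + c := hf 3
  have h13 : f 1 - f 3 = (f 0 - f 2) * (f 0 + f 2) := by linear_combination h0 - h2
  have h20 : f 2 - f 0 = (f 1 - f 3) * (f 1 + f 3) := by linear_combination h1 - h3
  rw [h13] at h20
  refine mul_left_cancel₀ (sub_ne_zero.2 h02) ?_
  linear_combination -h20

lemma trace_cubic (hf : ∀ j, f (j + 1) = f j ^ 2 + c) (h02 : f 0 ≠ f 2) :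
    (∑ j, f j) ^ 3 + (4 * c + 3) * ∑ j, f j + 4 = 0 := by
  have h0 : f 1 = f 0 ^ 2 + c := hf 0
  have h1 : f 2 = f 1 ^ 2 + c := hf 1
  have h2 : f 3 = f 2 ^ 2 + c := hf 2
  have h3 : f 0 = f 3 ^ 2 + c := hf 3
  have hsum : ∑ j, f j = (f 0 + f 2) + (f 1 + f 3) := by
    rw [show ∑ j, f j = f 0 + f 1 + f 2 + f 3 from Fin.sum_univ_four f]
    ring
  have hpq := half_trace_mul_half_trace hf h02
  have hdiff : (f 0 + f 2) ^ 2 * (f 0 - f 2) ^ 2 = (f 1 - f 3) ^ 2 := by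
    rw [show f 1 - f 3 = (f 0 + f 2) * (f 0 - f 2) by linear_combination h0 - h2]
    ring
  have h02sq : (f 0 - f 2) ^ 2 = 2 * (f 1 + f 3) - 4 * c - (f 0 + f 2) ^ 2 := by
    linear_combination -2 * h0 - 2 * h2
  have h13sq : (f 1 - f 3) ^ 2 = 2 * (f 0 + f 2) - 4 * c - (f 1 + f 3) ^ 2 := by
    linear_combination -2 * h1 - 2 * h3
  rw [h02sq, h13sq] at hdiff
  rw [hsum]
  generalize f 0 + f 2 = p at *
  generalize f 1 + f 3 = q at *
  linear_combination q * hdiff + (3 * (p + q) + 4 * c * p + p ^ 3 - 2 * (p * q - 2)) * hpq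

/-- With `p = f 0 + f 2` and `q = f 1 + f 3`, the points of a `4`-cycle of trace `t` are recovered
from `p + q = t` and `p * q = -1` through `f 1 - f 3 = p * (f 0 - f 2)` and
`(f 0 - f 2) ^ 2 = 2 * q - 4 * c - p ^ 2`. -/
lemma exists_four_cycle_of_trace_cubic [CharZero K] [IsAlgClosed K] {t : K}
    (ht : t ^ 3 + (4 * c + 3) * t + 4 = 0) (h5 : 4 * c + 5 ≠ 0) (h1 : (4 * c - 1) ^ 2 + 4 ≠ 0) :
    ∃ f : ZMod 4 → K, (∀ j, f (j + 1) = f j ^ 2 + c) ∧ ∑ j, f j = t ∧ f 0 ≠ f 2 := by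
  obtain ⟨d, hd⟩ := IsAlgClosed.exists_pow_nat_eq (t ^ 2 + 4) two_pos
  obtain ⟨p, q, hpq, rfl⟩ : ∃ p q, p * q = -1 ∧ t = p + q :=
    ⟨(t + d) / 2, (t - d) / 2, by linear_combination (-1 / 4 : K) * hd, by ring⟩
  obtain ⟨u, hu⟩ := IsAlgClosed.exists_pow_nat_eq (2 * q - 4 * c - p ^ 2) two_pos
  have hpu : p ^ 2 * u ^ 2 = 2 * p - 4 * c - q ^ 2 := by
    rw [hu]
    linear_combination -p * ht + (2 * p + q ^ 2 + 4 * c + 3 * p * (p + q)) * hpq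
  have hu0 : u ≠ 0 := by
    rintro rfl
    have hfactor : (p - q) * (p + q + 2) = 0 := by linear_combination hu - hpu
    rcases mul_eq_zero.1 hfactor with h | h
    · obtain rfl : p = q := sub_eq_zero.1 h
      exact h1 (by linear_combination (4 * c - 1 + 2 * p) * (hu - hpq) + 4 * hpq)
    · rw [show p + q = -2 by linear_combination h] at ht
      exact h5 (mul_left_cancel₀ two_ne_zero (by linear_combination -ht))
  refine ⟨fun j ↦ (![(p + u) / 2, (q + p * u) / 2, (p - u) / 2, (q - p * u) / 2] : Fin 4 → K) j,
    fun j ↦ ?_, ?_, fun h02 ↦ hu0 ?_⟩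
  · change Fin 4 at j
    fin_cases j
    · change (q + p * u) / 2 = ((p + u) / 2) ^ 2 + c
      linear_combination (-1 / 4 : K) * hu
    · change (p - u) / 2 = ((q + p * u) / 2) ^ 2 + c
      linear_combination (-1 / 4 : K) * hpu - u / 2 * hpq
    · change (q - p * u) / 2 = ((p - u) / 2) ^ 2 + c
      linear_combination (-1 / 4 : K) * hu
    · change (p + u) / 2 = ((q - p * u) / 2) ^ 2 + c
      linear_combination (-1 / 4 : K) * hpu + u / 2 * hpq
  · refine (Fin.sum_univ_four _).trans ?_
    change (p + u) / 2 + (q + p * u) / 2 + (p - u) / 2 + (q - p * u) / 2 = p + q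
    ring
  · have : (p + u) / 2 = (p - u) / 2 := h02
    linear_combination this

lemma apply_add_eq_of_apply_eq (hf : ∀ j, f (j + 1) = f j ^ 2 + c)
    (hg : ∀ j, g (j + 1) = g j ^ 2 + c) {j j' : ZMod 4} (h : f j = g j') (k : ZMod 4) :
    f (j + k) = g (j' + k) := by
  have hnat (n : ℕ) : f (j + n) = g (j' + n) := by
    induction n with
    | zero => simpa using h
    | succ n ih => simp only [Nat.cast_succ, ← add_assoc, hf, hg, ih]
  simpa using hnat k.val

lemma sum_eq_of_apply_eq (hf : ∀ j, f (j + 1) = f j ^ 2 + c)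
    (hg : ∀ j, g (j + 1) = g j ^ 2 + c) {j j' : ZMod 4} (h : f j = g j') :
    ∑ k, f k = ∑ k, g k :=
  calc ∑ k, f k = ∑ k, f (j + k) := (Equiv.sum_comp (Equiv.addLeft j) f).symm
    _ = ∑ k, g (j' + k) := Finset.sum_congr rfl fun k _ ↦ apply_add_eq_of_apply_eq hf hg h k
    _ = ∑ k, g k := Equiv.sum_comp (Equiv.addLeft j') g

lemma injective_of_apply_zero_ne_apply_two (hf : ∀ j, f (j + 1) = f j ^ 2 + c)
    (h02 : f 0 ≠ f 2) : Function.Injective f := by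
  intro j j' h
  have hperiod (x : ZMod 4) : f x = f (x + (j' - j)) := by
    convert apply_add_eq_of_apply_eq hf hf h (x - j) using 2 <;> ring
  have key : ∀ d : ZMod 4, d ≠ 0 → d = 2 ∨ d + d = 2 := by decide
  by_contra hne
  have h0 := hperiod 0
  rw [zero_add] at h0
  rcases key _ (sub_ne_zero.2 (Ne.symm hne)) with hd | hd
  · exact h02 (hd ▸ h0)
  · exact h02 (h0.trans (hd ▸ hperiod _))

/-- The sum of the points of the `i`-th cycle of `r`. -/
def cycleTrace (r : Fin 3 × ZMod 4 → K) (i : Fin 3) : K := ∑ j, r (i, j)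

/-- Three `4`-cycles `j ↦ r (i, j)` of the map `x ↦ x ^ 2 + c`, on twelve distinct points and with
distinct traces. -/
structure IsFourCycleSystem (c : K) (r : Fin 3 × ZMod 4 → K) : Prop where
  step : ∀ i j, r (i, j + 1) = r (i, j) ^ 2 + c
  injective : Function.Injective r
  trace_injective : Function.Injective (cycleTrace r)

lemma exists_isFourCycleSystem [CharZero K] [IsAlgClosed K] (h5 : 4 * c + 5 ≠ 0)
    (h1 : (4 * c - 1) ^ 2 + 4 ≠ 0) (hdisc : (4 * c + 3) ^ 3 + 108 ≠ 0) :
    ∃ r, IsFourCycleSystem c r := by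
  obtain ⟨t, ht, hroot⟩ : ∃ t : Fin 3 → K, Function.Injective t ∧
      ∀ i, t i ^ 3 + (4 * c + 3) * t i + 4 = 0 := by
    refine exists_injective_cubic_root fun h ↦ hdisc ?_
    linear_combination (1 / 4 : K) * h
  choose f hstep hsum h02 using fun i ↦ exists_four_cycle_of_trace_cubic (hroot i) h5 h1
  obtain rfl : cycleTrace (fun p ↦ f p.1 p.2) = t := funext hsum
  refine ⟨fun p ↦ f p.1 p.2, hstep, ?_, ht⟩
  rintro ⟨i, j⟩ ⟨i', j'⟩ (h : f i j = f i' j')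
  obtain rfl : i = i' := ht (sum_eq_of_apply_eq (hstep i) (hstep i') h)
  rw [injective_of_apply_zero_ne_apply_two (hstep i) (h02 i) h]

end FourCycle

namespace IsFourCycleSystem

variable {K L : Type*} [Field K] [Field L] {c : K} {r : Fin 3 × ZMod 4 → K}

lemma apply_zero_ne_apply_two (hr : IsFourCycleSystem c r) (i : Fin 3) : r (i, 0) ≠ r (i, 2) :=
  hr.injective.ne fun h ↦ absurd (congrArg Prod.snd h) (by decide : (0 : ZMod 4) ≠ 2)

lemma of_comp {φ : K →+* L} (h : IsFourCycleSystem (φ c) (φ ∘ r)) : IsFourCycleSystem c r where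
  step i j := φ.injective (by simpa using h.step i j)
  injective := h.injective.of_comp
  trace_injective i j hij := h.trace_injective (by simpa [cycleTrace] using congrArg φ hij)

lemma isRoot (hr : IsFourCycleSystem c r) (p : Fin 3 × ZMod 4) : (Phi4 c).IsRoot (r p) := by
  obtain ⟨i, j⟩ := p
  have h := eval_Phi4_mul c (r (i, j))
  have hperiod : ∀ j : ZMod 4, j + 1 + 1 + 1 + 1 = j ∧ j + 1 + 1 ≠ j := by decide
  rw [← hr.step, ← hr.step, ← hr.step, ← hr.step, (hperiod j).1, sub_self] at h
  refine (mul_eq_zero.1 h).resolve_right (sub_ne_zero.2 (hr.injective.ne fun h ↦ ?_))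
  exact (hperiod j).2 (congrArg Prod.snd h)

lemma roots_eq (hr : IsFourCycleSystem c r) :
    (Phi4 c).roots = (Finset.univ.map ⟨r, hr.injective⟩).val := by
  refine roots_eq_of_natDegree_le_card_of_ne_zero ?_ ?_ (Phi4_monic c).ne_zero
  · rintro x hx
    obtain ⟨p, -, rfl⟩ := Finset.mem_map.1 hx
    exact hr.isRoot p
  · simp [natDegree_Phi4, ZMod.card]

lemma mem_range_of_isRoot (hr : IsFourCycleSystem c r) {x : K} (hx : (Phi4 c).IsRoot x) :
    x ∈ Set.range r := by
  simpa [hr.roots_eq] using (mem_roots (Phi4_monic c).ne_zero).2 hx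

end IsFourCycleSystem

lemma exists_isFourCycleSystem_of_splits {L : Type*} [Field L] [CharZero L] {c : L}
    (hsplits : (Phi4 c).Splits) (h5 : 4 * c + 5 ≠ 0) (h1 : (4 * c - 1) ^ 2 + 4 ≠ 0)
    (hdisc : (4 * c + 3) ^ 3 + 108 ≠ 0) : ∃ r, IsFourCycleSystem c r := by
  have φ : L →+* AlgebraicClosure L := algebraMap L _
  have hφ {x : L} (hx : x ≠ 0) : φ x ≠ 0 := (map_ne_zero φ).2 hx
  obtain ⟨s, hs⟩ := exists_isFourCycleSystem (c := φ c) (by simpa [map_ofNat] using hφ h5)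
    (by simpa [map_ofNat] using hφ h1) (by simpa [map_ofNat] using hφ hdisc)
  have hrange (p : Fin 3 × ZMod 4) : s p ∈ φ.range := by
    refine hsplits.mem_range_of_isRoot (Phi4_monic c).ne_zero ?_
    rw [map_Phi4]
    exact hs.isRoot p
  choose r hr using hrange
  obtain rfl : φ ∘ r = s := funext hr
  exact ⟨r, hs.of_comp⟩


section CycleAlternant

variable {K : Type*} [Field K] {c : K} {r : Fin 3 × ZMod 4 → K}

/-- The alternating sum of the points of the `i`-th cycle of `r`. -/
def cycleAlternant (r : Fin 3 × ZMod 4 → K) (i : Fin 3) : K :=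
  ∑ j, (-1 : ℤˣ) ^ modTwo j • r (i, j)

lemma cycleAlternant_eq (r : Fin 3 × ZMod 4 → K) (i : Fin 3) :
    cycleAlternant r i = r (i, 0) + r (i, 2) - (r (i, 1) + r (i, 3)) := by
  have hsum (f : ZMod 4 → K) : ∑ j, f j = f 0 + f 1 + f 2 + f 3 := Fin.sum_univ_four f
  have h2 : modTwo 2 = 0 := rfl
  have h3 : modTwo 3 = modTwo 1 := rfl
  have h1 : modTwo 1 = 1 := rfl
  rw [cycleAlternant, hsum, h3, h2, h1, map_zero, uzpow_zero, uzpow_one]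
  simp only [one_smul, Units.neg_smul]
  ring

namespace IsFourCycleSystem

lemma cycleTrace_cubic (hr : IsFourCycleSystem c r) (i : Fin 3) :
    cycleTrace r i ^ 3 + (4 * c + 3) * cycleTrace r i + 4 = 0 :=
  trace_cubic (hr.step i) (hr.apply_zero_ne_apply_two i)

lemma cycleTrace_symmetric (hr : IsFourCycleSystem c r) :
    ∑ i, cycleTrace r i = 0 ∧
      cycleTrace r 0 * cycleTrace r 1 + cycleTrace r 0 * cycleTrace r 2 +
        cycleTrace r 1 * cycleTrace r 2 = 4 * c + 3 ∧
      cycleTrace r 0 * cycleTrace r 1 * cycleTrace r 2 = -4 :=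
  symmetric_eq_of_cubic_root hr.trace_injective hr.cycleTrace_cubic

lemma vandermonde_cycleTrace_sq (hr : IsFourCycleSystem c r) :
    (Matrix.vandermonde (cycleTrace r)).det ^ 2 = 2 ^ 2 * -((4 * c + 3) ^ 3 + 108) := by
  obtain ⟨h1, h2, h3⟩ := hr.cycleTrace_symmetric
  rw [vandermonde_det_sq h1 h2 h3]
  ring

lemma cycleAlternant_sq (hr : IsFourCycleSystem c r) (i : Fin 3) :
    cycleAlternant r i ^ 2 = cycleTrace r i ^ 2 + 4 := by
  have hpq := half_trace_mul_half_trace (f := fun j ↦ r (i, j)) (hr.step i)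
    (hr.apply_zero_ne_apply_two i)
  have htrace : cycleTrace r i = r (i, 0) + r (i, 1) + r (i, 2) + r (i, 3) := Fin.sum_univ_four _
  rw [cycleAlternant_eq, htrace]
  linear_combination -4 * hpq

lemma sum_cycleAlternant_sq (hr : IsFourCycleSystem c r) :
    ∑ i, cycleAlternant r i ^ 2 = 4 - 2 * (4 * c - 1) := by
  obtain ⟨h1, h2, -⟩ := hr.cycleTrace_symmetric
  simp only [Fin.sum_univ_three, hr.cycleAlternant_sq] at h1 ⊢
  linear_combination (cycleTrace r 0 + cycleTrace r 1 + cycleTrace r 2) * h1 - 2 * h2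

lemma sum_cycleAlternant_sq_mul_sq (hr : IsFourCycleSystem c r) :
    cycleAlternant r 0 ^ 2 * cycleAlternant r 1 ^ 2 +
        cycleAlternant r 0 ^ 2 * cycleAlternant r 2 ^ 2 +
        cycleAlternant r 1 ^ 2 * cycleAlternant r 2 ^ 2 = (4 * c - 1) * (4 * c - 9) := by
  obtain ⟨h1, h2, -⟩ := hr.cycleTrace_symmetric
  simp only [Fin.sum_univ_three, hr.cycleAlternant_sq] at h1 ⊢
  generalize cycleTrace r 0 = t₀ at *
  generalize cycleTrace r 1 = t₁ at *
  generalize cycleTrace r 2 = t₂ at *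
  linear_combination (-2 * (t₀ * t₁ * t₂) + 8 * (t₀ + t₁ + t₂)) * h1 +
    ((t₀ * t₁ + t₀ * t₂ + t₁ * t₂) + (4 * c + 3) - 16) * h2

lemma prod_cycleAlternant_sq (hr : IsFourCycleSystem c r) :
    (∏ i, cycleAlternant r i) ^ 2 = 2 ^ 2 * ((4 * c - 1) ^ 2 + 4) := by
  obtain ⟨h1, h2, h3⟩ := hr.cycleTrace_symmetric
  simp only [Fin.sum_univ_three, Fin.prod_univ_three, mul_pow, hr.cycleAlternant_sq] at h1 ⊢
  generalize cycleTrace r 0 = t₀ at *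
  generalize cycleTrace r 1 = t₁ at *
  generalize cycleTrace r 2 = t₂ at *
  linear_combination (t₀ * t₁ * t₂ - 4) * h3 + (-8 * (t₀ * t₁ * t₂) + 16 * (t₀ + t₁ + t₂)) * h1 +
    4 * ((t₀ * t₁ + t₀ * t₂ + t₁ * t₂) + (4 * c + 3) - 8) * h2

lemma sum_sq_resolvent [CharZero K] (hr : IsFourCycleSystem c r) {e : Fin 3 → K}
    (he : ∀ i, e i ^ 2 = cycleAlternant r i ^ 2) {x : K}
    (hx : (∑ i, e i) ^ 2 = 2 * (x - (4 * c - 1) + 2)) :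
    (x ^ 2 - (4 * c - 1) * (4 * c - 9)) ^ 2 =
      32 * ((4 * c - 1) ^ 2 + 4) * (x - (4 * c - 1) + 2) := by
  have h1 := hr.sum_cycleAlternant_sq
  have h2 := hr.sum_cycleAlternant_sq_mul_sq
  have h3 := hr.prod_cycleAlternant_sq
  simp only [Fin.sum_univ_three, Fin.prod_univ_three, mul_pow, ← he] at h1 h2 h3 hx
  obtain rfl : x = e 0 * e 1 + e 0 * e 2 + e 1 * e 2 :=
    mul_left_cancel₀ two_ne_zero (by linear_combination h1 - hx)
  rw [← h2]
  linear_combination 4 * (e 0 + e 1 + e 2) ^ 2 * h3 + 16 * ((4 * c - 1) ^ 2 + 4) * h1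

end IsFourCycleSystem

end CycleAlternant

/-! ### The Galois action -/

section GaloisAction

open Equiv

variable {k L : Type*} [Field k] [Field L] [Algebra k L] {c : k} {r : Fin 3 × ZMod 4 → L}

namespace IsFourCycleSystem

lemma exists_apply_eq (hr : IsFourCycleSystem (algebraMap k L c) r) (g : Gal(L/k))
    (p : Fin 3 × ZMod 4) : ∃ q, r q = g (r p) := by
  refine hr.mem_range_of_isRoot ?_
  have h := (hr.isRoot p).map (f := (g : L →+* L))
  rwa [map_Phi4, RingHom.coe_coe, AlgEquiv.commutes] at h

/-- The action of the Galois group on the labels of a four-cycle system. -/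
noncomputable def galHom (hr : IsFourCycleSystem (algebraMap k L c) r) :
    Gal(L/k) →* Perm (Fin 3 × ZMod 4) :=
  MonoidHom.toHomPerm
    { toFun := fun g p ↦ (hr.exists_apply_eq g p).choose
      map_one' := funext fun p ↦ hr.injective (hr.exists_apply_eq 1 p).choose_spec
      map_mul' := fun g h ↦ funext fun p ↦ hr.injective <| by
        refine (hr.exists_apply_eq (g * h) p).choose_spec.trans ?_
        refine Eq.trans ?_ (hr.exists_apply_eq g _).choose_spec.symm
        exact congrArg g (hr.exists_apply_eq h p).choose_spec.symm }

lemma apply_galHom (hr : IsFourCycleSystem (algebraMap k L c) r) (g : Gal(L/k))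
    (p : Fin 3 × ZMod 4) : r (hr.galHom g p) = g (r p) :=
  (hr.exists_apply_eq g p).choose_spec

lemma galHom_mem_centralizer (hr : IsFourCycleSystem (algebraMap k L c) r) (g : Gal(L/k)) :
    hr.galHom g ∈ Subgroup.centralizer {wreathPerm (1 : Perm (Fin 3)) (1 : Fin 3 → ZMod 4)} := by
  rw [Subgroup.mem_centralizer_singleton_iff]
  ext1 p
  refine hr.injective ?_
  have hshift (q : Fin 3 × ZMod 4) :
      r (wreathPerm 1 1 q) = r q ^ 2 + algebraMap k L c := hr.step q.1 q.2
  simp only [Perm.mul_apply, hshift, hr.apply_galHom, map_add, map_pow, AlgEquiv.commutes]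

lemma apply_cycleTrace (hr : IsFourCycleSystem (algebraMap k L c) r) {g : Gal(L/k)}
    {σ : Perm (Fin 3)} {a : Fin 3 → ZMod 4} (hg : wreathPerm σ a = hr.galHom g) (i : Fin 3) :
    g (cycleTrace r i) = cycleTrace r (σ i) := by
  simp only [cycleTrace, map_sum, ← hr.apply_galHom, ← hg, wreathPerm_apply]
  exact Equiv.sum_comp (Equiv.addRight (a i)) fun j ↦ r (σ i, j)

lemma apply_cycleAlternant (hr : IsFourCycleSystem (algebraMap k L c) r) {g : Gal(L/k)}
    {σ : Perm (Fin 3)} {a : Fin 3 → ZMod 4} (hg : wreathPerm σ a = hr.galHom g) (i : Fin 3) :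
    g (cycleAlternant r i) = (-1 : ℤˣ) ^ modTwo (a i) • cycleAlternant r (σ i) := by
  have hsmul (u : ℤˣ) (x : L) : g (u • x) = u • g x := by
    simp only [Units.smul_def, map_zsmul]
  simp only [cycleAlternant, map_sum, hsmul, ← hr.apply_galHom, ← hg, wreathPerm_apply,
    Finset.smul_sum]
  refine (Finset.sum_congr rfl fun j _ ↦ ?_).trans (Equiv.sum_comp (Equiv.addRight (a i))
    fun j ↦ (-1 : ℤˣ) ^ modTwo (a i) • (-1 : ℤˣ) ^ modTwo j • r (σ i, j))
  rw [Equiv.coe_addRight, smul_smul, ← uzpow_add, map_add, add_left_comm,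
    CharTwo.add_self_eq_zero, add_zero]

/-- The signed permutations of the three cycles by which the Galois group acts on the
alternants. -/
noncomputable def signImage (hr : IsFourCycleSystem (algebraMap k L c) r) :
    Subgroup (Perm (Fin 3 × ZMod 2)) :=
  wreathMap modTwo hr.galHom.range

lemma exists_mem_signImage (hr : IsFourCycleSystem (algebraMap k L c) r) (g : Gal(L/k)) :
    ∃ σ s, wreathPerm σ s ∈ hr.signImage ∧ (∀ i, g (cycleTrace r i) = cycleTrace r (σ i)) ∧
      ∀ i, g (cycleAlternant r i) = (-1 : ℤˣ) ^ s i • cycleAlternant r (σ i) := by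
  obtain ⟨σ, a, h⟩ := mem_centralizer_wreathPerm_one_one.1 (hr.galHom_mem_centralizer g)
  exact ⟨σ, modTwo ∘ a, wreathPerm_comp_mem_wreathMap ⟨g, h.symm⟩, hr.apply_cycleTrace h,
    hr.apply_cycleAlternant h⟩

end IsFourCycleSystem

end GaloisAction

section SignedAction

open Equiv

variable {L : Type*} [Field L]

lemma map_det_vandermonde {n : ℕ} (φ : L →+* L) {t : Fin n → L} {σ : Perm (Fin n)}
    (h : ∀ i, φ (t i) = t (σ i)) :
    φ (Matrix.vandermonde t).det = Perm.sign σ • (Matrix.vandermonde t).det := by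
  have hmap : φ.mapMatrix (Matrix.vandermonde t) = (Matrix.vandermonde t).submatrix σ id := by
    ext i j
    simp [h]
  rw [RingHom.map_det, hmap, Matrix.det_permute, Units.smul_def, zsmul_eq_mul]

variable {ι : Type*} [Fintype ι] {d : ι → L} {σ : Perm ι} {s : ι → ZMod 2}

lemma map_prod_eq_smul (φ : L →+* L) (h : ∀ i, φ (d i) = (-1 : ℤˣ) ^ s i • d (σ i)) :
    φ (∏ i, d i) = (-1 : ℤˣ) ^ (∑ i, s i) • ∏ i, d i := by
  have hpow : (-1 : ℤˣ) ^ (∑ i, s i) = ∏ i, (-1 : ℤˣ) ^ s i :=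
    Additive.ofMul.injective (by simp only [ofMul_uzpow, ofMul_prod, Finset.sum_smul])
  rw [map_prod, hpow, ← Equiv.prod_comp σ d, ← Finset.prod_smul]
  exact Finset.prod_congr rfl fun i _ ↦ h i

lemma map_sq_sum_smul (φ : L →+* L) (h : ∀ i, φ (d i) = (-1 : ℤˣ) ^ s i • d (σ i))
    {η : ι → ZMod 2} {κ : ZMod 2} (hκ : ∀ i, (s - η + η ∘ σ) i = κ) :
    φ ((∑ i, (-1 : ℤˣ) ^ η i • d i) ^ 2) = (∑ i, (-1 : ℤˣ) ^ η i • d i) ^ 2 := by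
  have hsum : φ (∑ i, (-1 : ℤˣ) ^ η i • d i) =
      (-1 : ℤˣ) ^ κ • ∑ i, (-1 : ℤˣ) ^ η i • d i := by
    rw [map_sum, Finset.smul_sum, ← Equiv.sum_comp σ fun i ↦ (-1 : ℤˣ) ^ κ • (-1 : ℤˣ) ^ η i • d i]
    refine Finset.sum_congr rfl fun i _ ↦ ?_
    have hexp : η i + s i = κ + η (σ i) := by
      have hκ : s i - η i + η (σ i) = κ := hκ i
      linear_combination hκ + (η i - η (σ i)) * CharTwo.two_eq_zero (R := ZMod 2)
    rw [Units.smul_def, map_zsmul, ← Units.smul_def, h, smul_smul, smul_smul, ← uzpow_add, hexp,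
      uzpow_add]
  rw [map_pow, hsum, _root_.smul_pow, Int.units_sq, one_smul]

lemma exists_map_ne {k : Type*} [Field k] [Algebra k L] [FiniteDimensional k L] [IsGalois k L]
    {x : L} {y d : k} (hx : x ^ 2 = algebraMap k L (y ^ 2 * d)) (hy : y ≠ 0)
    (hd : ¬ IsSquare d) : ∃ g : Gal(L/k), g x ≠ x := by
  by_contra! hfix
  obtain ⟨z, rfl⟩ := (IsGalois.mem_range_algebraMap_iff_fixed x).2 hfix
  refine hd ⟨z / y, ?_⟩
  rw [← map_pow] at hx
  field_simp
  linear_combination -(algebraMap k L).injective hx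

end SignedAction

/-- The five Diophantine conditions under which the Galois group of `Phi4 c` is the full wreath
product: the cubic of the cycle traces has no root; the discriminant of that cubic, the norm of
the squared alternant and the product of these two are not squares (up to square factors); and
the quartic resolvent of the signed sums of the alternants has no root. -/
structure IsGenericParameter {k : Type*} [Field k] (c : k) : Prop where
  trace_ne (t : k) : t ^ 3 + (4 * c + 3) * t + 4 ≠ 0
  not_isSquare_disc : ¬ IsSquare (-((4 * c + 3) ^ 3 + 108))
  not_isSquare_norm : ¬ IsSquare ((4 * c - 1) ^ 2 + 4)
  not_isSquare_disc_mul_norm : ¬ IsSquare (-((4 * c + 3) ^ 3 + 108) * ((4 * c - 1) ^ 2 + 4))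
  resolvent_ne (x : k) : (x ^ 2 - (4 * c - 1) * (4 * c - 9)) ^ 2 ≠
    32 * ((4 * c - 1) ^ 2 + 4) * (x - (4 * c - 1) + 2)

namespace IsFourCycleSystem

open Equiv

variable {k L : Type*} [Field k] [Field L] [Algebra k L] [FiniteDimensional k L]
  [IsGalois k L] {c : k} {r : Fin 3 × ZMod 4 → L}

lemma exists_mem_blockPerms_apply_ne (hr : IsFourCycleSystem (algebraMap k L c) r)
    (hc : IsGenericParameter c) (i : Fin 3) : ∃ σ ∈ blockPerms hr.signImage, σ i ≠ i := by
  by_contra! hfix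
  have hT : cycleTrace r i ∈ Set.range (algebraMap k L) := by
    refine (IsGalois.mem_range_algebraMap_iff_fixed _).2 fun g ↦ ?_
    obtain ⟨σ, s, hσs, hT, -⟩ := hr.exists_mem_signImage g
    rw [hT, hfix σ ⟨s, hσs⟩]
  obtain ⟨t, ht⟩ := hT
  refine hc.trace_ne t ((algebraMap k L).injective ?_)
  simpa [map_ofNat, ht] using hr.cycleTrace_cubic i

variable [CharZero k]

lemma exists_mem_blockPerms_sign_ne_one (hr : IsFourCycleSystem (algebraMap k L c) r)
    (hc : IsGenericParameter c) : ∃ σ ∈ blockPerms hr.signImage, Perm.sign σ ≠ 1 := by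
  obtain ⟨g, hg⟩ := exists_map_ne (x := (Matrix.vandermonde (cycleTrace r)).det) (y := (2 : k))
    (by simp [hr.vandermonde_cycleTrace_sq, map_ofNat]) two_ne_zero hc.not_isSquare_disc
  obtain ⟨σ, s, hσs, hT, -⟩ := hr.exists_mem_signImage g
  refine ⟨σ, ⟨s, hσs⟩, fun hσ ↦ hg ?_⟩
  simpa [hσ] using map_det_vandermonde (g : L →+* L) hT

lemma exists_mem_signImage_sum_ne_zero (hr : IsFourCycleSystem (algebraMap k L c) r)
    (hc : IsGenericParameter c) : ∃ σ s, wreathPerm σ s ∈ hr.signImage ∧ ∑ i, s i ≠ 0 := by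
  obtain ⟨g, hg⟩ := exists_map_ne (x := ∏ i, cycleAlternant r i) (y := (2 : k))
    (by simp [hr.prod_cycleAlternant_sq, map_ofNat]) two_ne_zero hc.not_isSquare_norm
  obtain ⟨σ, s, hσs, -, hD⟩ := hr.exists_mem_signImage g
  refine ⟨σ, s, hσs, fun hs ↦ hg ?_⟩
  simpa [hs] using map_prod_eq_smul (g : L →+* L) hD

lemma exists_mem_signImage_not_sign_iff (hr : IsFourCycleSystem (algebraMap k L c) r)
    (hc : IsGenericParameter c) :
    ∃ σ s, wreathPerm σ s ∈ hr.signImage ∧ ¬ (Perm.sign σ = 1 ↔ ∑ i, s i = 0) := by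
  have hsq : ((Matrix.vandermonde (cycleTrace r)).det * ∏ i, cycleAlternant r i) ^ 2 =
      algebraMap k L (4 ^ 2 * (-((4 * c + 3) ^ 3 + 108) * ((4 * c - 1) ^ 2 + 4))) := by
    rw [mul_pow, hr.vandermonde_cycleTrace_sq, hr.prod_cycleAlternant_sq]
    simp only [map_mul, map_neg, map_add, map_sub, map_pow, map_ofNat, map_one]
    ring
  obtain ⟨g, hg⟩ := exists_map_ne hsq (by norm_num) hc.not_isSquare_disc_mul_norm
  obtain ⟨σ, s, hσs, hT, hD⟩ := hr.exists_mem_signImage g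
  refine ⟨σ, s, hσs, fun hiff ↦ hg ?_⟩
  have hsign : ∀ (u : ℤˣ) (x : ZMod 2), (u = 1 ↔ x = 0) → (-1) ^ x = u := by decide
  have hV := map_det_vandermonde (g : L →+* L) hT
  have hP := map_prod_eq_smul (g : L →+* L) hD
  rw [hsign _ _ hiff] at hP
  rw [map_mul]
  refine (congrArg₂ (· * ·) hV hP).trans ?_
  rw [smul_mul_smul_comm, Int.units_mul_self, one_smul]

lemma exists_mem_signImage_cocycle (hr : IsFourCycleSystem (algebraMap k L c) r)
    (hc : IsGenericParameter c) (η : Fin 3 → ZMod 2) :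
    ∃ σ s, wreathPerm σ s ∈ hr.signImage ∧ ∃ i j, (s - η + η ∘ σ) i ≠ (s - η + η ∘ σ) j := by
  by_contra! hconst
  set e : Fin 3 → L := fun i ↦ (-1 : ℤˣ) ^ η i • cycleAlternant r i with he
  have hfix (g : Gal(L/k)) : g ((∑ i, e i) ^ 2) = (∑ i, e i) ^ 2 := by
    obtain ⟨σ, s, hσs, -, hD⟩ := hr.exists_mem_signImage g
    exact map_sq_sum_smul (g : L →+* L) hD fun i ↦ hconst σ s hσs i 0
  obtain ⟨w, hw⟩ := (IsGalois.mem_range_algebraMap_iff_fixed _).2 hfix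
  have hesq (i : Fin 3) : e i ^ 2 = cycleAlternant r i ^ 2 := by
    rw [he, _root_.smul_pow, Int.units_sq, one_smul]
  have := charZero_of_injective_algebraMap (algebraMap k L).injective
  refine hc.resolvent_ne (w / 2 - 2 + (4 * c - 1)) ((algebraMap k L).injective ?_)
  have := hr.sum_sq_resolvent hesq (x := algebraMap k L (w / 2 - 2 + (4 * c - 1))) (by
    simp only [← hw, map_add, map_sub, map_mul, map_div₀, map_ofNat, map_one]
    ring)
  simpa [map_ofNat] using this

lemma wreathPerm_mem_range_galHom (hr : IsFourCycleSystem (algebraMap k L c) r)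
    (hc : IsGenericParameter c) (σ : Perm (Fin 3)) (a : Fin 3 → ZMod 4) :
    wreathPerm σ a ∈ hr.galHom.range := by
  have hmove := hr.exists_mem_blockPerms_apply_ne hc
  have hblock : blockPerms hr.signImage = ⊤ :=
    perm_three_eq_top hmove (hr.exists_mem_blockPerms_sign_ne_one hc)
  have htrans : translations hr.signImage = ⊤ :=
    translations_eq_top hmove (hr.exists_mem_signImage_sum_ne_zero hc)
      (hr.exists_mem_signImage_not_sign_iff hc) (hr.exists_mem_signImage_cocycle hc)
  refine wreathPerm_mem (eq_top_iff.2 fun τ _ ↦ ?_)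
    (translations_eq_top_of_wreathMap exists_double_of_modTwo_eq_zero htrans) σ a
  obtain ⟨b, hb, -⟩ := mem_wreathMap.1 (wreathPerm_mem hblock htrans τ 0)
  exact ⟨b, hb⟩

end IsFourCycleSystem

lemma irreducible_of_forall_exists_map_eq {k L ι : Type*} [Field k] [Field L] [Algebra k L]
    [Fintype ι] {p : k[X]} (hp : p.Monic) {x : ι → L} (hx : Function.Injective x)
    (hcard : p.natDegree ≤ Fintype.card ι) {i : ι} (hroot : aeval (x i) p = 0)
    (htrans : ∀ j, ∃ g : Gal(L/k), g (x i) = x j) : Irreducible p := by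
  have hint : IsIntegral k (x i) := ⟨p, hp, hroot⟩
  have hconj (j : ι) : ((minpoly k (x i)).map (algebraMap k L)).eval (x j) = 0 := by
    obtain ⟨g, hg⟩ := htrans j
    rw [eval_map_algebraMap, ← hg, ← minpoly.algEquiv_eq g, minpoly.aeval]
  have hle : Fintype.card ι ≤ (minpoly k (x i)).natDegree := by
    by_contra! hlt
    refine minpoly.ne_zero hint ((Polynomial.map_eq_zero (algebraMap k L)).1 ?_)
    exact eq_zero_of_natDegree_lt_card_of_eval_eq_zero _ hx hconj (by rwa [natDegree_map])
  rw [eq_of_monic_of_dvd_of_natDegree_le (minpoly.monic hint) hp (minpoly.dvd k _ hroot)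
    (hcard.trans hle)]
  exact minpoly.irreducible hint

section GaloisGroup

open Equiv

lemma map_centralizer_singleton {G H : Type*} [Group G] [Group H] (e : G ≃* H) (g : G) :
    (Subgroup.centralizer {g}).map e.toMonoidHom = Subgroup.centralizer {e g} := by
  ext x
  obtain ⟨y, rfl⟩ := e.surjective x
  refine (Subgroup.mem_map_iff_mem (f := e.toMonoidHom) e.injective).trans ?_
  simp [Subgroup.mem_centralizer_singleton_iff, ← map_mul]

lemma permCongr_wreathPerm_one_one :
    (finProdFinEquiv : Fin 3 × Fin 4 ≃ Fin 12).permCongrHom (wreathPerm (A := ZMod 4) 1 1) =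
      ([0, 1, 2, 3] : List (Fin 12)).formPerm * ([4, 5, 6, 7] : List (Fin 12)).formPerm *
        ([8, 9, 10, 11] : List (Fin 12)).formPerm := by
  decide +kernel

/-- Numbering `Fin 3 × ZMod 4` lexicographically identifies the wreath product with `Wgroup`. -/
noncomputable def centralizerEquivWgroup :
    Subgroup.centralizer {wreathPerm (1 : Perm (Fin 3)) (1 : Fin 3 → ZMod 4)} ≃* Wgroup :=
  ((finProdFinEquiv : Fin 3 × Fin 4 ≃ Fin 12).permCongrHom.subgroupMap _).trans <|
    MulEquiv.subgroupCongr <|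
      (map_centralizer_singleton _ _).trans <| by rw [permCongr_wreathPerm_one_one]; rfl

lemma isGalois_splittingField {k : Type*} [Field k] [CharZero k] (p : k[X]) :
    IsGalois k p.SplittingField where
  to_normal := Normal.of_isSplittingField p

variable {k : Type*} [Field k] {c : k}

lemma IsFourCycleSystem.galHom_injective {r : Fin 3 × ZMod 4 → (Phi4 c).SplittingField}
    (hr : IsFourCycleSystem (algebraMap k (Phi4 c).SplittingField c) r) :
    Function.Injective hr.galHom := by
  refine fun g h hgh ↦ Gal.ext _ fun x hx ↦ ?_
  obtain ⟨p, rfl⟩ := hr.mem_range_of_isRoot (x := x) (by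
    rw [IsRoot, ← map_Phi4, eval_map_algebraMap]
    exact aeval_eq_zero_of_mem_rootSet hx)
  exact (hr.apply_galHom g p).symm.trans (hgh ▸ hr.apply_galHom h p)

variable [CharZero k]

lemma IsGenericParameter.exists_isFourCycleSystem (hc : IsGenericParameter c) :
    ∃ r, IsFourCycleSystem (algebraMap k (Phi4 c).SplittingField c) r := by
  set φ := algebraMap k (Phi4 c).SplittingField
  have hφ {x : k} (hx : x ≠ 0) : φ x ≠ 0 := (map_ne_zero φ).2 hx
  have := charZero_of_injective_algebraMap φ.injective
  have h5 : 4 * c + 5 ≠ 0 := fun h ↦ hc.trace_ne (-2) (by linear_combination -2 * h)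
  have hnorm : (4 * c - 1) ^ 2 + 4 ≠ 0 := fun h ↦ hc.not_isSquare_norm (h ▸ IsSquare.zero)
  have hdisc : (4 * c + 3) ^ 3 + 108 ≠ 0 := fun h ↦
    hc.not_isSquare_disc (by rw [h, neg_zero]; exact IsSquare.zero)
  refine exists_isFourCycleSystem_of_splits ?_ (by simpa [map_ofNat] using hφ h5)
    (by simpa [map_ofNat] using hφ hnorm) (by simpa [map_ofNat] using hφ hdisc)
  rw [← map_Phi4]
  exact SplittingField.splits _

theorem IsGenericParameter.irreducible_Phi4 (hc : IsGenericParameter c) : Irreducible (Phi4 c) := by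
  obtain ⟨r, hr⟩ := hc.exists_isFourCycleSystem
  have := isGalois_splittingField (Phi4 c)
  refine irreducible_of_forall_exists_map_eq (Phi4_monic c) hr.injective (i := (0, 0))
    (by simp [natDegree_Phi4]) ?_ fun p ↦ ?_
  · rw [← eval_map_algebraMap, map_Phi4]
    exact hr.isRoot (0, 0)
  · obtain ⟨g, hg⟩ := hr.wreathPerm_mem_range_galHom hc (swap 0 p.1) fun _ ↦ p.2
    exact ⟨g, by simp [← hr.apply_galHom, hg]⟩

theorem IsGenericParameter.nonempty_gal_mulEquiv (hc : IsGenericParameter c) :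
    Nonempty ((Phi4 c).Gal ≃* Wgroup) := by
  obtain ⟨r, hr⟩ := hc.exists_isFourCycleSystem
  have := isGalois_splittingField (Phi4 c)
  have hrange : hr.galHom.range = Subgroup.centralizer {wreathPerm 1 1} := by
    refine le_antisymm ?_ fun x hx ↦ ?_
    · rintro _ ⟨g, rfl⟩
      exact hr.galHom_mem_centralizer g
    · obtain ⟨σ, a, rfl⟩ := mem_centralizer_wreathPerm_one_one.1 hx
      exact hr.wreathPerm_mem_range_galHom hc σ a
  exact ⟨((MonoidHom.ofInjective hr.galHom_injective).trans
    (MulEquiv.subgroupCongr hrange)).trans centralizerEquivWgroup⟩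

end GaloisGroup

/-! ### Generic rational parameters -/

/-- Completing the square in `c` turns the resolvent into the curve `y² = u (u² - 2u + 5)`. -/
lemma eq_of_resolvent_eq {c x : ℚ} (h : (x ^ 2 - (4 * c - 1) * (4 * c - 9)) ^ 2 =
    32 * ((4 * c - 1) ^ 2 + 4) * (x - (4 * c - 1) + 2)) : c = 0 ∨ c = -5 / 2 := by
  obtain ⟨u, rfl⟩ : ∃ u, x = 4 * c - 1 + 2 * (u - 1) := ⟨(x - (4 * c - 1)) / 2 + 1, by ring⟩
  have hcurve : (((u - 1) * (4 * c + u)) / 2) ^ 2 = u * (u ^ 2 - 2 * u + 5) := by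
    linear_combination h / 64
  obtain rfl | rfl | rfl := eq_zero_or_one_or_five_of_sq_eq hcurve
  · left
    exact pow_eq_zero_iff two_ne_zero |>.1 (by linear_combination hcurve / 4)
  · norm_num at hcurve
  · have : c * (2 * c + 5) = 0 := by linear_combination hcurve / 32
    obtain hc | hc := mul_eq_zero.1 this
    · exact .inl hc
    · exact .inr (by linear_combination hc / 2)

lemma isGenericParameter_of_not_exists {c : ℚ} (hne : c ≠ -5 / 2)
    (hlam : ¬ ∃ r : ℚ, r ≠ 0 ∧ c = (r ^ 2 + 2 * r - 4) / (8 * r))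
    (heta : ¬ ∃ r : ℚ, r ≠ 0 ∧ c = (4 - 3 * r - r ^ 3) / (4 * r)) : IsGenericParameter c where
  trace_ne t ht := by
    have h0 : t ≠ 0 := by
      rintro rfl
      norm_num at ht
    refine heta ⟨-t, neg_ne_zero.2 h0, ?_⟩
    rw [eq_div_iff (by simpa using h0)]
    linear_combination -ht
  not_isSquare_disc := by
    rintro ⟨y, hy⟩
    exact sq_ne_cube_sub (-(4 * c + 3)) y (by linear_combination -hy)
  not_isSquare_norm := by
    rintro ⟨q, hq⟩
    have h0 : 4 * c - 1 + q ≠ 0 := fun h ↦ by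
      have : (4 : ℚ) = 0 := by linear_combination hq - (4 * c - 1 - q) * h
      norm_num at this
    refine hlam ⟨4 * c - 1 + q, h0, ?_⟩
    rw [eq_div_iff (by simpa using h0)]
    linear_combination hq
  not_isSquare_disc_mul_norm := by
    rintro ⟨y, hy⟩
    exact quadratic_mul_cubic_ne_sq (-(4 * c + 3)) y (by linear_combination hy)
  resolvent_ne x hx := by
    obtain rfl | h := eq_of_resolvent_eq hx
    · exact heta ⟨1, one_ne_zero, by norm_num⟩
    · exact hne h

theorem phi4_galois_generic (c : ℚ)
    (hc : c ∉ ({-5, -5/2, -155/72, -2, -5/4, 0, 19/16} : Set ℚ))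
    (hlam : ¬ ∃ r : ℚ, r ≠ 0 ∧ c = (r ^ 2 + 2 * r - 4) / (8 * r))
    (heta : ¬ ∃ r : ℚ, r ≠ 0 ∧ c = (4 - 3 * r - r ^ 3) / (4 * r)) :
    Irreducible (Phi4 c) ∧ Nonempty ((Phi4 c).Gal ≃* Wgroup) := by
  have hne : c ≠ -5 / 2 := by
    rintro rfl
    simp at hc
  have hgen := isGenericParameter_of_not_exists hne hlam heta
  exact ⟨hgen.irreducible_Phi4, hgen.nonempty_gal_mulEquiv⟩
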